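/- A BIBS system is SIIOS if and only if it admits an SIIOS-Lyapunov function. -/

import Mathlib

open MeasureTheory Set Filter Topology
open scoped ENNReal NNReal

noncomputable section

/-- A function of class `K`: continuous, strictly increasing on `[0,∞)` and vanishing at `0`. -/
def IsClassK (α : ℝ → ℝ) : Prop :=
  ContinuousOn α (Ici 0) ∧ StrictMonoOn α (Ici 0) ∧ α 0 = 0

/-- A function of class `K∞`: class `K` and unbounded. -/
def IsClassKInfty (α : ℝ → ℝ) : Prop :=
  IsClassK α ∧ Tendsto α atTop atTop

/-- A function of class `KL`. -/
def IsClassKL (β : ℝ → ℝ → ℝ) : Prop :=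
  (∀ t ∈ Ici (0:ℝ), IsClassK fun s => β s t) ∧
  ∀ s ∈ Ici (0:ℝ), AntitoneOn (fun t => β s t) (Ici 0) ∧
    Tendsto (fun t => β s t) atTop (𝓝 0)

/-- Admissible inputs: measurable and locally essentially bounded on `[0,∞)`. -/
def IsInput {m : ℕ} (u : ℝ → EuclideanSpace ℝ (Fin m)) : Prop :=
  Measurable u ∧ ∀ T > (0:ℝ), ∃ C : ℝ, ∀ᵐ t ∂(volume.restrict (Icc 0 T)), ‖u t‖ ≤ C

/-- The essential supremum norm of an input over `[0,∞)`, as an extended nonnegative real. -/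
def uNormE {m : ℕ} (u : ℝ → EuclideanSpace ℝ (Fin m)) : ℝ≥0∞ :=
  essSup (fun t => (‖u t‖₊ : ℝ≥0∞)) (volume.restrict (Ici 0))

/-- An input which is (globally) essentially bounded on `[0,∞)`. -/
def BddInput {m : ℕ} (u : ℝ → EuclideanSpace ℝ (Fin m)) : Prop := uNormE u ≠ ⊤

/-- The essential supremum norm `‖u‖` of an input, as a real number. -/
def uNorm {m : ℕ} (u : ℝ → EuclideanSpace ℝ (Fin m)) : ℝ := (uNormE u).toReal

/-- `x` is the solution map of the forward-complete system `ẋ = f(x,u)`: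
for every initial state `ξ` and admissible input `u`, `t ↦ x t ξ u` solves the corresponding
integral equation on all of `[0,∞)`. -/
def IsSolutionMap {n m : ℕ}
    (f : EuclideanSpace ℝ (Fin n) → EuclideanSpace ℝ (Fin m) → EuclideanSpace ℝ (Fin n))
    (x : ℝ → EuclideanSpace ℝ (Fin n) → (ℝ → EuclideanSpace ℝ (Fin m)) →
      EuclideanSpace ℝ (Fin n)) : Prop :=
  ∀ ξ u, IsInput u → ∀ t ∈ Ici (0:ℝ),
    x t ξ u = ξ + ∫ s in (0:ℝ)..t, f (x s ξ u) (u s)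

/-- The system is bounded-input bounded-state (BIBS): it is forward complete (encoded by the
solution-map property) and trajectories are bounded in terms of a class-`K` function of the
initial state and of the input norm. -/
def IsBIBS {n m : ℕ}
    (f : EuclideanSpace ℝ (Fin n) → EuclideanSpace ℝ (Fin m) → EuclideanSpace ℝ (Fin n))
    (x : ℝ → EuclideanSpace ℝ (Fin n) → (ℝ → EuclideanSpace ℝ (Fin m)) →
      EuclideanSpace ℝ (Fin n)) : Prop :=
  IsSolutionMap f x ∧ ∃ σ : ℝ → ℝ, IsClassK σ ∧ ∀ ξ u, IsInput u → BddInput u →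
    ∀ t ∈ Ici (0:ℝ), ‖x t ξ u‖ ≤ max (σ ‖ξ‖) (σ (uNorm u))

/-- Input-to-output stability (IOS). -/
def IsIOS {n m p : ℕ}
    (h : EuclideanSpace ℝ (Fin n) → EuclideanSpace ℝ (Fin p))
    (x : ℝ → EuclideanSpace ℝ (Fin n) → (ℝ → EuclideanSpace ℝ (Fin m)) →
      EuclideanSpace ℝ (Fin n)) : Prop :=
  ∃ β γ, IsClassKL β ∧ IsClassK γ ∧ ∀ ξ u, IsInput u → BddInput u →
    ∀ t ∈ Ici (0:ℝ), ‖h (x t ξ u)‖ ≤ max (β ‖ξ‖ t) (γ (uNorm u))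

/-- State-independent input-to-output stability (SIIOS). -/
def IsSIIOS {n m p : ℕ}
    (h : EuclideanSpace ℝ (Fin n) → EuclideanSpace ℝ (Fin p))
    (x : ℝ → EuclideanSpace ℝ (Fin n) → (ℝ → EuclideanSpace ℝ (Fin m)) →
      EuclideanSpace ℝ (Fin n)) : Prop :=
  ∃ β γ, IsClassKL β ∧ IsClassK γ ∧ ∀ ξ u, IsInput u → BddInput u →
    ∀ t ∈ Ici (0:ℝ), ‖h (x t ξ u)‖ ≤ max (β ‖h ξ‖ t) (γ (uNorm u))

/-- An SIIOS-Lyapunov function for the system `ẋ = f(x,u)`, `y = h(x)`. -/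
def IsSIIOSLyapunov {n m p : ℕ}
    (f : EuclideanSpace ℝ (Fin n) → EuclideanSpace ℝ (Fin m) → EuclideanSpace ℝ (Fin n))
    (h : EuclideanSpace ℝ (Fin n) → EuclideanSpace ℝ (Fin p))
    (V : EuclideanSpace ℝ (Fin n) → ℝ) : Prop :=
  ContDiff ℝ (⊤:ℕ∞) V ∧ (∀ ξ, 0 ≤ V ξ) ∧
  (∃ α₁ α₂ : ℝ → ℝ, IsClassKInfty α₁ ∧ IsClassKInfty α₂ ∧
    ∀ ξ, α₁ ‖h ξ‖ ≤ V ξ ∧ V ξ ≤ α₂ ‖h ξ‖) ∧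
  ∃ χ α₃ : ℝ → ℝ, IsClassK χ ∧ IsClassK α₃ ∧
    ∀ ξ μ, χ ‖μ‖ ≤ V ξ → fderiv ℝ V ξ (f ξ μ) ≤ -α₃ (V ξ)

/-!
If `V` is an SIIOS-Lyapunov function, the differential inequality holds along trajectories as long
as `V` exceeds the gain of the input. Comparing a value `v` of `V` reached at time `t` with the
initial value gives `v + t * α₃ v ≤ V ξ`, which is a class `KL` estimate.

Conversely, let `g` be the inverse of the gain. Starting at `ξ`, choose a level `a`, an input with
`‖u‖ ≤ g a` and a time `t`, and collect the reward `(2 - exp (-t)) * min a (‖y(t, ξ, u)‖ - a)`.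
Let `V ξ` be the supremum of these rewards. A positive reward means that the output exceeds the
gain, so that `‖y(t, ξ, u)‖ ≤ β(‖h ξ‖, t)`: hence `V` is comparable with `‖h‖`, and where it is
bounded below only bounded times and levels matter, which makes it locally Lipschitz there. A
nearly optimal plan has level at least `V ξ / 4`, so any input value `μ` with `‖μ‖ ≤ g (V ξ / 4)`
may be prepended to it; since the weight of time increases, `V` strictly decreases along such `μ`.
Mollifying `V` on a locally finite family of shells, cutting off at levels `ε`, summing over
`ε = 2⁻ᵏ` and rescaling turns `V` into a smooth Lyapunov function.
-/

open scoped ContDiff Manifold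

/-! ### Comparison functions -/

section Comparison

variable {α δ : ℝ → ℝ} {β : ℝ → ℝ → ℝ} {r s t v : ℝ}

lemma IsClassK.mono (hα : IsClassK α) (hs : 0 ≤ s) (hst : s ≤ t) : α s ≤ α t :=
  hα.2.1.monotoneOn hs (hs.trans hst) hst

lemma IsClassK.nonneg (hα : IsClassK α) (hs : 0 ≤ s) : 0 ≤ α s :=
  hα.2.2.ge.trans (hα.mono le_rfl hs)

lemma IsClassK.pos (hα : IsClassK α) (hs : 0 < s) : 0 < α s :=
  hα.2.2.ge.trans_lt (hα.2.1 self_mem_Ici hs.le hs)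

lemma IsClassK.comp (hα : IsClassK α) (hδ : IsClassK δ) : IsClassK fun s => α (δ s) := by
  have hm : MapsTo δ (Ici 0) (Ici 0) := fun s hs => hδ.nonneg hs
  exact ⟨hα.1.comp hδ.1 hm, hα.2.1.comp hδ.2.1 hm, by simp [hδ.2.2, hα.2.2]⟩

lemma IsClassKInfty.comp (hα : IsClassKInfty α) (hδ : IsClassKInfty δ) :
    IsClassKInfty fun s => α (δ s) :=
  ⟨hα.1.comp hδ.1, hα.2.comp hδ.2⟩

lemma IsClassK.isClassKInfty_id_add (hα : IsClassK α) : IsClassKInfty fun s => s + α s := by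
  refine ⟨⟨continuousOn_id.add hα.1, fun s hs t ht hst => add_lt_add hst (hα.2.1 hs ht hst),
    by simp [hα.2.2]⟩, tendsto_atTop_mono' _ ?_ tendsto_id⟩
  filter_upwards [eventually_ge_atTop 0] with s hs
  exact le_add_of_nonneg_right (hα.nonneg hs)

lemma IsClassK.isClassKInfty_one_add_mul (hα : IsClassK α) :
    IsClassKInfty fun s => (1 + s) * α s := by
  refine ⟨⟨(continuousOn_const.add continuousOn_id).mul hα.1, fun s hs t ht hst => ?_,
    by simp [hα.2.2]⟩, tendsto_atTop_mono' _ ?_ (tendsto_id.atTop_mul_const (hα.pos one_pos))⟩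
  · have hs : 0 ≤ s := hs
    exact mul_lt_mul'' (by linarith) (hα.2.1 hs ht hst) (by linarith) (hα.nonneg hs)
  · filter_upwards [eventually_ge_atTop 1] with s hs
    exact mul_le_mul (by simp) (hα.mono zero_le_one hs) (hα.pos one_pos).le (by linarith)

lemma IsClassK.const_mul {c : ℝ} (hc : 0 < c) (hα : IsClassK α) : IsClassK fun s => c * α s :=
  ⟨continuousOn_const.mul hα.1, fun _ hs _ ht hst => mul_lt_mul_of_pos_left (hα.2.1 hs ht hst) hc,
    by simp [hα.2.2]⟩

lemma IsClassKInfty.const_mul {c : ℝ} (hc : 0 < c) (hα : IsClassKInfty α) :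
    IsClassKInfty fun s => c * α s :=
  ⟨hα.1.const_mul hc, hα.2.const_mul_atTop hc⟩

lemma isClassKInfty_orderIso (e : ℝ ≃o ℝ) (he : e 0 = 0) : IsClassKInfty e :=
  ⟨⟨e.continuous.continuousOn, e.strictMono.strictMonoOn _, he⟩, e.tendsto_atTop⟩

lemma isClassKInfty_orderIso_symm (e : ℝ ≃o ℝ) (he : e 0 = 0) : IsClassKInfty e.symm :=
  isClassKInfty_orderIso e.symm (e.symm_apply_eq.2 he.symm)

lemma IsClassKInfty.exists_orderIso (hα : IsClassKInfty α) :
    ∃ e : ℝ ≃o ℝ, e 0 = 0 ∧ ∀ s, 0 ≤ s → e s = α s := by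
  classical
  let g : ℝ → ℝ := fun s => if 0 ≤ s then α s else s
  have hgα : ∀ s, 0 ≤ s → g s = α s := fun s hs => if_pos hs
  have hmono : StrictMono g := by
    intro s t hst
    simp only [g]
    split_ifs with hs ht ht
    · exact hα.1.2.1 hs ht hst
    · exact absurd (hs.trans hst.le) ht
    · exact (not_le.1 hs).trans_le (hα.1.nonneg ht)
    · exact hst
  have hsurj : Function.Surjective g := by
    intro y
    rcases lt_or_ge y 0 with hy | hy
    · exact ⟨y, if_neg hy.not_ge⟩
    · obtain ⟨b, hb, hyb⟩ := ((eventually_ge_atTop (0 : ℝ)).and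
        (hα.2.eventually_ge_atTop y)).exists
      obtain ⟨s, hs, hsy⟩ := intermediate_value_Icc hb (hα.1.1.mono Icc_subset_Ici_self)
        (show y ∈ Icc (α 0) (α b) from ⟨by rwa [hα.1.2.2], hyb⟩)
      exact ⟨s, (hgα s hs.1).trans hsy⟩
  exact ⟨hmono.orderIsoOfSurjective g hsurj, (hgα 0 le_rfl).trans hα.1.2.2, hgα⟩

/-- The witness is `s / (1 + s)` times the average of `g` over `[0, s]`: the average is monotone
and at most `g s`, and the first factor makes the product strictly increasing. -/
lemma exists_isClassK_le_of_monotone {g : ℝ → ℝ} (hg : Monotone g) (hg0 : 0 ≤ g 0)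
    (hpos : ∀ s, 0 < s → 0 < g s) : ∃ κ, IsClassK κ ∧ ∀ s, 0 ≤ s → κ s ≤ g s := by
  let A : ℝ → ℝ := fun s => ∫ r in (0 : ℝ)..1, g (s * r)
  have hgs : ∀ s, 0 ≤ s → IntervalIntegrable (fun r => g (s * r)) volume 0 1 := fun s hs =>
    (hg.comp (monotone_id.const_mul hs)).intervalIntegrable
  have hA_mono : ∀ s t, 0 ≤ s → s ≤ t → A s ≤ A t := fun s t hs hst =>
    intervalIntegral.integral_mono_on zero_le_one (hgs s hs) (hgs t (hs.trans hst)) fun r hr =>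
      hg (mul_le_mul_of_nonneg_right hst hr.1)
  have hA_pos : ∀ s, 0 < s → 0 < A s := fun s hs =>
    intervalIntegral.intervalIntegral_pos_of_pos_on (hgs s hs.le)
      (fun r hr => hpos _ (mul_pos hs hr.1)) one_pos
  have hA_le : ∀ s, 0 ≤ s → A s ≤ g s := fun s hs => by
    simpa using intervalIntegral.integral_mono_on zero_le_one (hgs s hs)
      (intervalIntegrable_const (c := g s)) fun r hr => hg (mul_le_of_le_one_right hs hr.2)
  have hA_nonneg : ∀ s, 0 ≤ s → 0 ≤ A s := fun s hs =>
    intervalIntegral.integral_nonneg zero_le_one fun r hr => hg0.trans (hg (mul_nonneg hs hr.1))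
  have hcont : Continuous fun s => s * A s :=
    (intervalIntegral.continuous_primitive (μ := volume)
      (fun _ _ => hg.intervalIntegrable) 0).congr fun s => by
      simp [A, intervalIntegral.mul_integral_comp_mul_left]
  refine ⟨fun s => s / (1 + s) * A s, ⟨?_, fun s hs t _ hst => ?_, by simp⟩, fun s hs => ?_⟩
  · refine (hcont.continuousOn.div (by fun_prop) fun s hs => ?_).congr fun s _ =>
      div_mul_eq_mul_div _ _ _
    exact (add_pos_of_pos_of_nonneg one_pos hs).ne'
  · have hs : 0 ≤ s := hs
    have hlt : s / (1 + s) < t / (1 + t) := by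
      rw [div_lt_div_iff₀ (by linarith) (by linarith)]
      linarith
    calc s / (1 + s) * A s ≤ s / (1 + s) * A t := by
          gcongr
          exact hA_mono s t hs hst.le
      _ < t / (1 + t) * A t := mul_lt_mul_of_pos_right hlt (hA_pos t (hs.trans_lt hst))
  · calc s / (1 + s) * A s ≤ 1 * A s := by
          gcongr
          · exact hA_nonneg s hs
          · exact div_le_one_of_le₀ (by linarith) (by linarith)
      _ ≤ g s := (one_mul _).trans_le (hA_le s hs)

lemma exists_isClassK_comp_le {X : Type*} {S D : X → ℝ} (hS : ∀ x, 0 ≤ S x) (hD : ∀ x, 0 ≤ D x)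
    (hSD : ∀ c, 0 < c → ∃ q, 0 < q ∧ ∀ x, c ≤ S x → q ≤ D x) :
    ∃ κ, IsClassK κ ∧ ∀ x, κ (S x) ≤ D x := by
  let A : ℝ → Set ℝ := fun s => {q | q ≤ 1 ∧ ∀ x, s ≤ S x → q ≤ D x}
  have hbdd : ∀ s, BddAbove (A s) := fun s => ⟨1, fun q hq => hq.1⟩
  have hzero : ∀ s, (0 : ℝ) ∈ A s := fun s => ⟨zero_le_one, fun x _ => hD x⟩
  have hmono : Monotone fun s => sSup (A s) := fun s t hst =>
    csSup_le_csSup (hbdd t) ⟨0, hzero s⟩ fun q hq => ⟨hq.1, fun x hx => hq.2 x (hst.trans hx)⟩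
  have hpos : ∀ s, 0 < s → 0 < sSup (A s) := fun s hs => by
    obtain ⟨q, hq, hqD⟩ := hSD s hs
    exact (lt_min hq one_pos).trans_le (le_csSup (hbdd s)
      ⟨min_le_right _ _, fun x hx => (min_le_left _ _).trans (hqD x hx)⟩)
  obtain ⟨κ, hκ, hle⟩ := exists_isClassK_le_of_monotone hmono (le_csSup (hbdd 0) (hzero 0)) hpos
  exact ⟨κ, hκ, fun x => (hle _ (hS x)).trans (csSup_le ⟨0, hzero _⟩ fun q hq => hq.2 x le_rfl)⟩

lemma exists_isClassKInfty_comp_le {X : Type*} {S D : X → ℝ} (hS : ∀ x, 0 ≤ S x)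
    (hD : ∀ x, 0 ≤ D x) (hSD : ∀ c, 0 < c → ∃ b, 0 < b ∧ ∀ x, c ≤ S x → b * S x ≤ D x) :
    ∃ α, IsClassKInfty α ∧ ∀ x, α (S x) ≤ D x := by
  have hS1 : ∀ x, 0 < 1 + S x := fun x => by linarith [hS x]
  obtain ⟨κ, hκ, hle⟩ := exists_isClassK_comp_le (D := fun x => D x / (1 + S x)) hS
    (fun x => div_nonneg (hD x) (hS1 x).le) fun c hc => by
      obtain ⟨b, hb, hbS⟩ := hSD c hc
      refine ⟨b * (c / (1 + c)), by positivity, fun x hx => ?_⟩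
      calc b * (c / (1 + c)) ≤ b * (S x / (1 + S x)) := by
            gcongr ?_ * ?_
            rw [div_le_div_iff₀ (by linarith) (hS1 x)]
            linarith
        _ = b * S x / (1 + S x) := (mul_div_assoc _ _ _).symm
        _ ≤ D x / (1 + S x) := div_le_div_of_nonneg_right (hbS x hx) (hS1 x).le
  exact ⟨_, hκ.isClassKInfty_one_add_mul, fun x => (le_div_iff₀' (hS1 x)).1 (hle x)⟩

lemma exists_contDiff_isClassKInfty {D : ℝ → Set ℝ} (hup : ∀ s, IsUpperSet (D s))
    (hloc : ∀ s, ∃ c, ∀ᶠ y in 𝓝 s, c ∈ D y) :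
    ∃ Θ : ℝ → ℝ, ContDiff ℝ ∞ Θ ∧ IsClassKInfty Θ ∧
      ∀ s, 1 ≤ deriv Θ s ∧ deriv Θ s ∈ D s := by
  obtain ⟨θ, hθ⟩ := exists_contMDiffMap_forall_mem_convex_of_local_const (n := (⊤ : ℕ∞)) 𝓘(ℝ, ℝ)
    (t := fun s => D s ∩ Ici 1)
    (fun s => (hup s).ordConnected.convex.inter (convex_Ici 1)) fun s => by
      obtain ⟨c, hc⟩ := hloc s
      exact ⟨max c 1, hc.mono fun y hy =>
        ⟨hup y (le_max_left _ _) hy, mem_Ici.2 (le_max_right _ _)⟩⟩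
  have hθs : ContDiff ℝ ∞ θ := θ.contMDiff.contDiff
  let Θ : ℝ → ℝ := fun s => ∫ r in (0 : ℝ)..s, θ r
  have hd : ∀ s, HasDerivAt Θ (θ s) s := fun s =>
    (hθs.continuous.integral_hasStrictDerivAt 0 s).hasDerivAt
  have hdiff : Differentiable ℝ Θ := fun s => (hd s).differentiableAt
  have hderiv : deriv Θ = θ := funext fun s => (hd s).deriv
  have hmono : StrictMono Θ := strictMono_of_deriv_pos fun s => by
    rw [hderiv]; exact one_pos.trans_le (hθ s).2
  refine ⟨Θ, contDiff_infty_iff_deriv.2 ⟨hdiff, hderiv ▸ hθs⟩,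
    ⟨⟨hdiff.continuous.continuousOn, hmono.strictMonoOn _, intervalIntegral.integral_same⟩,
      tendsto_atTop_mono' _ ?_ tendsto_id⟩, fun s => hderiv ▸ (hθ s).symm⟩
  filter_upwards [eventually_ge_atTop 0] with s hs
  simpa using intervalIntegral.integral_mono_on (μ := volume) hs intervalIntegrable_const
    (hθs.continuous.intervalIntegrable 0 s) fun r _ => (hθ r).2

lemma IsClassKL.mono_left (hβ : IsClassKL β) (hr : 0 ≤ r) (hrs : r ≤ s) (ht : 0 ≤ t) :
    β r t ≤ β s t :=
  (hβ.1 t ht).mono hr hrs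

lemma IsClassKL.anti_right (hβ : IsClassKL β) (hr : 0 ≤ r) (hs : 0 ≤ s) (hst : s ≤ t) :
    β r t ≤ β r s :=
  (hβ.2 r hr).1 hs (hs.trans hst) hst

lemma IsClassKL.exists_forall_le (hβ : IsClassKL β) (hr : 0 ≤ r) (hv : 0 < v) :
    ∃ T, 0 ≤ T ∧ ∀ s t, 0 ≤ s → s ≤ r → T ≤ t → β s t ≤ v := by
  obtain ⟨T, hTv, hT⟩ := (((hβ.2 r hr).2.eventually (eventually_le_nhds hv)).and
    (eventually_ge_atTop 0)).exists
  exact ⟨T, hT, fun s t hs hsr hTt =>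
    (hβ.mono_left hs hsr (hT.trans hTt)).trans ((hβ.anti_right hr hT hTt).trans hTv)⟩

lemma IsClassKL.comp (hβ : IsClassKL β) (hα : IsClassK α) (hδ : IsClassK δ) :
    IsClassKL fun s t => α (β (δ s) t) := by
  refine ⟨fun t ht => hα.comp ((hβ.1 t ht).comp hδ), fun s hs => ?_⟩
  have hs := hδ.nonneg hs
  have hβ0 : ∀ t, 0 ≤ t → 0 ≤ β (δ s) t := fun t ht => (hβ.1 t ht).nonneg hs
  refine ⟨fun t ht t' ht' htt' => hα.mono (hβ0 t' ht') (hβ.anti_right hs ht htt'), ?_⟩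
  have hlim := (hα.1 0 self_mem_Ici).tendsto.comp (tendsto_nhdsWithin_iff.2
    ⟨(hβ.2 _ hs).2, (eventually_ge_atTop 0).mono hβ0⟩)
  rwa [hα.2.2] at hlim

lemma IsClassK.exists_orderIso_add_mul (hα : IsClassK α) (ht : 0 ≤ t) :
    ∃ e : ℝ ≃o ℝ, e 0 = 0 ∧ ∀ v, 0 ≤ v → e v = v + t * α v := by
  rcases ht.eq_or_lt with rfl | ht
  · exact ⟨OrderIso.refl ℝ, rfl, by simp⟩
  · exact (hα.const_mul ht).isClassKInfty_id_add.exists_orderIso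

lemma IsClassK.exists_isClassKL_of_add_mul_le (hα : IsClassK α) :
    ∃ β, IsClassKL β ∧ ∀ s v t, 0 ≤ v → 0 ≤ t → v + t * α v ≤ s → v ≤ β s t := by
  have hφ : ∀ t : ℝ, ∃ e : ℝ ≃o ℝ, e 0 = 0 ∧ (0 ≤ t → ∀ v, 0 ≤ v → e v = v + t * α v) := by
    intro t
    by_cases ht : 0 ≤ t
    · exact (hα.exists_orderIso_add_mul ht).imp fun e he => ⟨he.1, fun _ => he.2⟩
    · exact ⟨OrderIso.refl ℝ, rfl, fun h => absurd h ht⟩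
  choose φ hφ0 hφ using hφ
  have hβ : ∀ s v t, 0 ≤ v → 0 ≤ t → (v ≤ (φ t).symm s ↔ v + t * α v ≤ s) :=
    fun s v t hv ht => by rw [OrderIso.le_symm_apply, hφ t ht v hv]
  have hβ0 : ∀ s t, 0 ≤ s → 0 ≤ (φ t).symm s := fun s t hs => by
    rwa [OrderIso.le_symm_apply, hφ0]
  refine ⟨fun s t => (φ t).symm s, ⟨fun t _ => (isClassKInfty_orderIso_symm _ (hφ0 t)).1,
    fun s hs => ⟨fun t ht t' ht' htt' => ?_, ?_⟩⟩, fun s v t hv ht => (hβ s v t hv ht).2⟩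
  · have hv := hβ0 s t' hs
    refine (hβ s _ t hv ht).2 (le_trans ?_ ((hβ s _ t' hv ht').1 le_rfl))
    gcongr
    exact hα.nonneg hv
  · have hs : 0 ≤ s := hs
    refine tendsto_order.2 ⟨fun a ha => .of_forall fun t => ha.trans_le (hβ0 s t hs),
      fun ε hε => ?_⟩
    filter_upwards [eventually_ge_atTop (s / α ε)] with t hst
    have ht : 0 ≤ t := (div_nonneg hs (hα.nonneg hε.le)).trans hst
    refine lt_of_not_ge fun hle => ?_
    have h₁ := (hβ s ε t hε.le ht).1 hle
    have h₂ := (div_le_iff₀ (hα.pos hε)).1 hst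
    linarith

end Comparison

/-! ### Trajectories -/

section Trajectories

variable {E : Type*} [NormedAddCommGroup E] [NormedSpace ℝ E] {z z₁ z₂ F F₁ F₂ : ℝ → E}
  {a b c d t T : ℝ}

section IntegralEquation

variable {ξ : E}

lemma continuousOn_of_integral_equation (hz : ∀ t, 0 ≤ t → z t = ξ + ∫ s in (0 : ℝ)..t, F s) :
    ContinuousOn z {t | 0 ≤ t ∧ IntervalIntegrable F volume 0 t} := by
  have hprim : ∀ b, 0 ≤ b → IntervalIntegrable F volume 0 b → ContinuousOn z (Icc 0 b) := by
    intro b hb hF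
    have := intervalIntegral.continuousOn_primitive_interval' hF left_mem_uIcc
    rw [uIcc_of_le hb] at this
    exact (continuousOn_const.add this).congr fun s hs => hz s hs.1
  rintro a ⟨ha, haF⟩
  by_cases hmax : ∃ b, a < b ∧ IntervalIntegrable F volume 0 b
  · obtain ⟨b, hab, hb⟩ := hmax
    refine (hprim b (ha.trans hab.le) hb a ⟨ha, hab.le⟩).mono_of_mem_nhdsWithin ?_
    filter_upwards [mem_nhdsWithin_of_mem_nhds (Iio_mem_nhds hab), self_mem_nhdsWithin]
      with s hsb hs
    exact ⟨hs.1, le_of_lt hsb⟩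
  · push Not at hmax
    exact (hprim a ha haF a ⟨ha, le_rfl⟩).mono fun s hs =>
      ⟨hs.1, not_lt.1 fun has => hmax s has hs.2⟩

lemma aestronglyMeasurable_of_integral_equation
    (hz : ∀ t, 0 ≤ t → z t = ξ + ∫ s in (0 : ℝ)..t, F s) :
    AEStronglyMeasurable z (volume.restrict (Ici 0)) := by
  set A : Set ℝ := {t | 0 ≤ t ∧ IntervalIntegrable F volume 0 t}
  have hAmeas : MeasurableSet A := OrdConnected.measurableSet ⟨fun a ha b hb c hc =>
    ⟨ha.1.trans hc.1, hb.2.mono_set (by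
      rw [uIcc_of_le (ha.1.trans hc.1), uIcc_of_le hb.1]
      exact Icc_subset_Icc_right hc.2)⟩⟩
  rw [← union_sdiff_cancel (show A ⊆ Ici 0 from fun s hs => hs.1), aestronglyMeasurable_union_iff]
  refine ⟨(continuousOn_of_integral_equation hz).aestronglyMeasurable hAmeas,
    (aestronglyMeasurable_const (b := ξ)).congr ?_⟩
  filter_upwards [ae_restrict_mem (measurableSet_Ici.diff hAmeas)] with s hs
  rw [hz s hs.1, intervalIntegral.integral_undef fun hi => hs.2 ⟨hs.1, hi⟩, add_zero]

/-- The integral is `0` as long as `F` is not known to be integrable, so integrability is part of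
the conclusion: it holds because `z` is then continuous or constant on pieces of `[0,∞)`. -/
lemma intervalIntegrable_of_integral_equation {C : ℝ}
    (hz : ∀ t, 0 ≤ t → z t = ξ + ∫ s in (0 : ℝ)..t, F s)
    (hF : AEStronglyMeasurable z (volume.restrict (Ici 0)) →
      AEStronglyMeasurable F (volume.restrict (Ici 0)))
    (hC : ∀ᵐ s ∂volume.restrict (Ici (0 : ℝ)), ‖F s‖ ≤ C) (hT : 0 ≤ T) :
    IntervalIntegrable F volume 0 T := by
  have hsub : Ioc 0 T ⊆ Ici 0 := Ioc_subset_Icc_self.trans Icc_subset_Ici_self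
  rw [intervalIntegrable_iff_integrableOn_Ioc_of_le hT]
  exact Integrable.of_bound ((hF (aestronglyMeasurable_of_integral_equation hz)).mono_measure
    (Measure.restrict_mono hsub le_rfl)) C (ae_restrict_of_ae_restrict_of_subset hsub hC)

end IntegralEquation

/-- `z` is an integral of the velocity `F` on `[a, b]`. This is the notion of a solution of an
ordinary differential equation whose right-hand side is only measurable in time. -/
structure HasVelocityOn (z F : ℝ → E) (a b : ℝ) : Prop where
  intervalIntegrable : IntervalIntegrable F volume a b
  eq_add_integral : ∀ t ∈ Icc a b, z t = z a + ∫ s in a..t, F s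

namespace HasVelocityOn

lemma sub_eq_integral (hz : HasVelocityOn z F a b) (hac : a ≤ c) (hcd : c ≤ d) (hdb : d ≤ b) :
    z d - z c = ∫ s in c..d, F s := by
  have hint : ∀ t ∈ Icc a b, IntervalIntegrable F volume a t := fun t ht =>
    hz.intervalIntegrable.mono_set (uIcc_subset_uIcc_left (Icc_subset_uIcc ht))
  have hc : c ∈ Icc a b := ⟨hac, hcd.trans hdb⟩
  have hd : d ∈ Icc a b := ⟨hac.trans hcd, hdb⟩
  rw [hz.eq_add_integral d hd, hz.eq_add_integral c hc, add_sub_add_left_eq_sub,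
    intervalIntegral.integral_interval_sub_left (hint d hd) (hint c hc)]

lemma mono (hz : HasVelocityOn z F a b) (hac : a ≤ c) (hcd : c ≤ d) (hdb : d ≤ b) :
    HasVelocityOn z F c d where
  intervalIntegrable := hz.intervalIntegrable.mono_set (uIcc_subset_uIcc
    (Icc_subset_uIcc ⟨hac, hcd.trans hdb⟩) (Icc_subset_uIcc ⟨hac.trans hcd, hdb⟩))
  eq_add_integral t ht := by
    rw [← hz.sub_eq_integral hac ht.1 (ht.2.trans hdb), add_sub_cancel]

lemma congr (hz : HasVelocityOn z F₁ a b) (hF : EqOn F₁ F₂ (Ioc a b)) (hab : a ≤ b) :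
    HasVelocityOn z F₂ a b where
  intervalIntegrable := hz.intervalIntegrable.congr (by rwa [uIoc_of_le hab])
  eq_add_integral t ht := by
    rw [hz.eq_add_integral t ht]
    congr 1
    refine intervalIntegral.integral_congr_ae (ae_of_all _ fun s hs => hF ?_)
    rw [uIoc_of_le ht.1] at hs
    exact ⟨hs.1, hs.2.trans ht.2⟩

lemma comp_add_right (hz : HasVelocityOn z F (a + c) (b + c)) :
    HasVelocityOn (fun t => z (t + c)) (fun t => F (t + c)) a b where
  intervalIntegrable := by simpa using hz.intervalIntegrable.comp_add_right c
  eq_add_integral t ht := by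
    rw [intervalIntegral.integral_comp_add_right]
    exact hz.eq_add_integral _ ⟨by linarith [ht.1], by linarith [ht.2]⟩

lemma sub (hz₁ : HasVelocityOn z₁ F₁ a b) (hz₂ : HasVelocityOn z₂ F₂ a b) :
    HasVelocityOn (fun t => z₁ t - z₂ t) (fun t => F₁ t - F₂ t) a b where
  intervalIntegrable := hz₁.intervalIntegrable.sub hz₂.intervalIntegrable
  eq_add_integral t ht := by
    have hsub : uIcc a t ⊆ uIcc a b := uIcc_subset_uIcc_left (Icc_subset_uIcc ht)
    rw [intervalIntegral.integral_sub (hz₁.intervalIntegrable.mono_set hsub)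
      (hz₂.intervalIntegrable.mono_set hsub), hz₁.eq_add_integral t ht, hz₂.eq_add_integral t ht]
    abel

lemma continuousOn (hz : HasVelocityOn z F a b) : ContinuousOn z (Icc a b) :=
  (continuousOn_const.add ((intervalIntegral.continuousOn_primitive_interval'
    hz.intervalIntegrable left_mem_uIcc).mono Icc_subset_uIcc)).congr hz.eq_add_integral

lemma norm_sub_le {B : ℝ} (hz : HasVelocityOn z F a b)
    (hB : ∀ᵐ s, s ∈ Ioc a b → ‖F s‖ ≤ B) (hac : a ≤ c) (hcd : c ≤ d) (hdb : d ≤ b) :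
    ‖z d - z c‖ ≤ B * (d - c) := by
  rw [hz.sub_eq_integral hac hcd hdb, ← abs_of_nonneg (sub_nonneg.2 hcd)]
  refine intervalIntegral.norm_integral_le_of_norm_le_const_ae ?_
  filter_upwards [hB] with s hs hsm
  rw [uIoc_of_le hcd] at hsm
  exact hs ⟨hac.trans_lt hsm.1, hsm.2.trans hdb⟩

lemma lipschitzOnWith {B : ℝ} (hz : HasVelocityOn z F a b)
    (hB : ∀ᵐ s, s ∈ Ioc a b → ‖F s‖ ≤ B) : LipschitzOnWith B.toNNReal z (Icc a b) := by
  have key : ∀ s ∈ Icc a b, ∀ t ∈ Icc a b, s ≤ t → dist (z t) (z s) ≤ B.toNNReal * dist t s := by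
    intro s hs t ht hst
    rw [dist_eq_norm, Real.dist_eq, abs_of_nonneg (sub_nonneg.2 hst)]
    exact (hz.norm_sub_le hB hs.1 hst ht.2).trans
      (mul_le_mul_of_nonneg_right (Real.le_coe_toNNReal B) (sub_nonneg.2 hst))
  refine LipschitzOnWith.of_dist_le_mul fun s hs t ht => ?_
  rcases le_total t s with h | h
  · exact key t ht s hs h
  · rw [dist_comm, dist_comm s]
    exact key s hs t ht h

lemma norm_le_add_mul_integral {M : ℝ} (hz : HasVelocityOn z F a b)
    (hF : ∀ᵐ s, s ∈ Ioc a b → ‖F s‖ ≤ M * ‖z s‖) (ht : t ∈ Icc a b) :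
    ‖z t‖ ≤ ‖z a‖ + M * ∫ s in a..t, ‖z s‖ := by
  rw [hz.eq_add_integral t ht, ← intervalIntegral.integral_const_mul]
  have hsub : Icc a t ⊆ Icc a b := Icc_subset_Icc_right ht.2
  refine (norm_add_le _ _).trans (add_le_add_right ?_ _)
  refine intervalIntegral.norm_integral_le_of_norm_le ht.1
    (hF.mono fun s hs hsm => hs ⟨hsm.1, hsm.2.trans ht.2⟩) ?_
  exact (((hz.continuousOn.mono hsub).norm).const_mul M).intervalIntegrable_of_Icc ht.1

lemma norm_le_mul_exp {M : ℝ} (hM : 0 ≤ M) (hz : HasVelocityOn z F a b)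
    (hF : ∀ᵐ s, s ∈ Ioc a b → ‖F s‖ ≤ M * ‖z s‖) (ht : t ∈ Icc a b) :
    ‖z t‖ ≤ ‖z a‖ * Real.exp (M * (t - a)) := by
  have hab : a ≤ b := ht.1.trans ht.2
  let φ : ℝ → ℝ := IccExtend hab (domRestrict (Icc a b) fun s => ‖z s‖)
  have hφc : Continuous φ := hz.continuousOn.norm.domRestrict.Icc_extend'
  have hφ : ∀ s ∈ Icc a b, φ s = ‖z s‖ := fun s hs => IccExtend_of_mem _ _ hs
  let Φ : ℝ → ℝ := fun s => ‖z a‖ + M * ∫ r in a..s, φ r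
  have hle : ∀ s ∈ Icc a b, φ s ≤ Φ s := fun s hs => by
    have hint : ∫ r in a..s, φ r = ∫ r in a..s, ‖z r‖ :=
      intervalIntegral.integral_congr fun r hr => hφ r <| by
        rw [uIcc_of_le hs.1] at hr
        exact ⟨hr.1, hr.2.trans hs.2⟩
    simpa only [Φ, hφ s hs, hint] using hz.norm_le_add_mul_integral hF hs
  have hderiv : ∀ s, HasDerivAt Φ (M * φ s) s := fun s =>
    ((hφc.integral_hasStrictDerivAt a s).hasDerivAt.const_mul M).const_add _
  have hφ0 : ∀ s, 0 ≤ φ s := fun s => norm_nonneg _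
  have hgronwall := norm_le_gronwallBound_of_norm_deriv_right_le (f := Φ) (δ := ‖z a‖) (K := M)
    (ε := 0)
    (fun s _ => (hderiv s).continuousAt.continuousWithinAt)
    (fun s _ => (hderiv s).hasDerivWithinAt) (by simp [Φ]) (fun s hs => by
      have hs : s ∈ Icc a b := ⟨hs.1, hs.2.le⟩
      rw [Real.norm_of_nonneg (mul_nonneg hM (hφ0 s)), add_zero]
      gcongr
      exact (hle s hs).trans (Real.le_norm_self _)) t ht
  rw [gronwallBound_ε0] at hgronwall
  exact (hφ t ht).ge.trans ((hle t ht).trans ((Real.le_norm_self _).trans hgronwall))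

lemma ae_hasDerivAt [CompleteSpace E] (hz : HasVelocityOn z F a b) :
    ∀ᵐ s, s ∈ Ioo a b → HasDerivAt z (F s) s := by
  filter_upwards [hz.intervalIntegrable.ae_hasDerivAt_integral] with s hd hs
  refine ((hd (Icc_subset_uIcc ⟨hs.1.le, hs.2.le⟩) a left_mem_uIcc).const_add (z a)
    ).congr_of_eventuallyEq ?_
  filter_upwards [Icc_mem_nhds hs.1 hs.2] with r hr using hz.eq_add_integral r hr

lemma sub_le_of_fderiv_le [CompleteSpace E] {B q : ℝ} {V : E → ℝ} (hz : HasVelocityOn z F a b)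
    (hab : a ≤ b) (hB : ∀ᵐ s, s ∈ Ioc a b → ‖F s‖ ≤ B) (hV : ContDiff ℝ 1 V)
    (hq : ∀ᵐ s, s ∈ Ioo a b → fderiv ℝ V (z s) (F s) ≤ q) :
    V (z b) - V (z a) ≤ q * (b - a) := by
  obtain ⟨K, hK⟩ := (hV.locallyLipschitz.locallyLipschitzOn (s := z '' Icc a b)
    ).exists_lipschitzOnWith_of_compact (isCompact_Icc.image_of_continuousOn hz.continuousOn)
  have hac : AbsolutelyContinuousOnInterval (V ∘ z) a b :=
    LipschitzOnWith.absolutelyContinuousOnInterval (K := K * B.toNNReal) <| by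
      rw [uIcc_of_le hab]
      exact hK.comp (hz.lipschitzOnWith hB) (mapsTo_image z _)
  calc V (z b) - V (z a) = ∫ s in a..b, deriv (V ∘ z) s := hac.integral_deriv_eq_sub.symm
    _ ≤ ∫ _ in a..b, q := by
      refine intervalIntegral.integral_mono_ae_restrict hab hac.intervalIntegrable_deriv
        intervalIntegrable_const ?_
      rw [← restrict_Ioo_eq_restrict_Icc]
      refine (ae_restrict_iff' measurableSet_Ioo).2 ?_
      filter_upwards [hz.ae_hasDerivAt, hq] with s hd hqs hs
      have hVd := ((hV.differentiable one_ne_zero) (z s)).hasFDerivAt.comp_hasDerivAt s (hd hs)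
      exact hVd.deriv.trans_le (hqs hs)
    _ = q * (b - a) := by rw [intervalIntegral.integral_const, smul_eq_mul, mul_comm]

end HasVelocityOn

/-- A level `k` strictly between `max c (v s)` and `v t` cannot be crossed upwards after the last
time at which `v ≤ k`, so `v t ≤ v s` for all `s ≤ t`, and one decay step covers `[0, t]`. -/
lemma add_mul_le_of_forall_sub_le {v α : ℝ → ℝ} (ht : 0 ≤ t) (hv : ContinuousOn v (Icc 0 t))
    (hα : ∀ k, c ≤ k → 0 ≤ α k)
    (hstep : ∀ a b k, 0 ≤ a → a ≤ b → b ≤ t → c ≤ k → (∀ s ∈ Ioo a b, k ≤ v s) →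
      v b - v a ≤ -α k * (b - a)) (hc : c < v t) :
    v t + t * α (v t) ≤ v 0 := by
  have hge : ∀ s ∈ Icc 0 t, v t ≤ v s := by
    intro s hs
    by_contra! hlt
    obtain ⟨k, hk, hkt⟩ := exists_between (max_lt hc hlt)
    obtain ⟨hck, hsk⟩ := max_lt_iff.1 hk
    have hcompact : IsCompact {r ∈ Icc s t | v r ≤ k} :=
      isCompact_Icc.of_isClosed_subset ((hv.mono (Icc_subset_Icc_left hs.1)
        ).preimage_isClosed_of_isClosed isClosed_Icc isClosed_Iic) fun r hr => hr.1
    obtain ⟨a, ⟨⟨hsa, hat⟩, hak⟩, hmax⟩ :=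
      hcompact.exists_isGreatest ⟨s, ⟨le_rfl, hs.2⟩, hsk.le⟩
    have hdrop := hstep a t k (hs.1.trans hsa) hat le_rfl hck.le fun r hr => by
      by_contra! hrk
      exact hr.1.not_ge (hmax ⟨⟨hsa.trans hr.1.le, hr.2.le⟩, hrk.le⟩)
    have := mul_nonneg (hα k hck.le) (sub_nonneg.2 hat)
    linarith
  have := hstep 0 t (v t) le_rfl ht le_rfl hc.le fun s hs => hge s ⟨hs.1.le, hs.2.le⟩
  linarith

end Trajectories

/-! ### Smooth approximation preserving directional decrease -/

section Smoothing

lemma exists_antitone_pos_le {b : ℕ → ℝ} (hb : ∀ j, 0 < b j) :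
    ∃ a : ℕ → ℝ, Antitone a ∧ (∀ j, 0 < a j) ∧ ∀ j, a j ≤ b j := by
  refine ⟨fun j => (Finset.range (j + 1)).inf' Finset.nonempty_range_add_one b,
    fun i j hij => Finset.inf'_mono _ (Finset.range_mono (by lia)) _,
    fun j => (Finset.lt_inf'_iff _).2 fun i _ => hb i,
    fun j => Finset.inf'_le _ (Finset.self_mem_range_succ j)⟩

/-- `W` decreases at rate at least `q` in the direction `v`, starting from any point within
distance `r` of `x`. This is the form of a directional derivative bound that survives averaging
over translates, without differentiability of `W`. -/
def DecreasesNear {E : Type*} [NormedAddCommGroup E] [NormedSpace ℝ E] (W : E → ℝ) (x v : E)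
    (r q : ℝ) : Prop :=
  ∃ τ₀, 0 < τ₀ ∧ ∀ y, ‖y - x‖ ≤ r → ∀ τ ∈ Ioo 0 τ₀, W (y + τ • v) ≤ W y - τ * q

section Mollification

variable {E : Type*} [NormedAddCommGroup E] [NormedSpace ℝ E] {W : E → ℝ} {x v : E} {q r r' τ₀ : ℝ}

lemma DecreasesNear.mono (hW : DecreasesNear W x v r q) (hr : r' ≤ r) : DecreasesNear W x v r' q :=
  hW.imp fun _ hτ₀ => ⟨hτ₀.1, fun y hy => hτ₀.2 y (hy.trans hr)⟩

lemma fderiv_apply_le_of_forall_le (hW : DifferentiableAt ℝ W x) (hτ₀ : 0 < τ₀)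
    (hdec : ∀ τ ∈ Ioo 0 τ₀, W (x + τ • v) ≤ W x - τ * q) : fderiv ℝ W x v ≤ -q := by
  refine le_of_tendsto (hW.hasFDerivAt.hasLineDerivAt v).tendsto_slope_zero_right ?_
  filter_upwards [Ioo_mem_nhdsGT hτ₀] with τ hτ
  rw [smul_eq_mul, inv_mul_le_iff₀ hτ.1]
  linarith [hdec τ hτ]

variable [FiniteDimensional ℝ E] [HasContDiffBump E] [MeasurableSpace E] [BorelSpace E]
  {μ : Measure E} [μ.IsAddHaarMeasure]

open scoped Convolution

lemma DecreasesNear.fderiv_convolution_apply_le (hdec : DecreasesNear W x v r q)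
    (hW : Continuous W) {φ : ContDiffBump (0 : E)} (hφ : φ.rOut ≤ r) :
    fderiv ℝ (φ.normed μ ⋆[ContinuousLinearMap.lsmul ℝ ℝ, μ] W) x v ≤ -q := by
  obtain ⟨τ₀, hτ₀, hdec⟩ := hdec
  have hdiff : ContDiff ℝ 1 (φ.normed μ ⋆[ContinuousLinearMap.lsmul ℝ ℝ, μ] W) :=
    φ.hasCompactSupport_normed.contDiff_convolution_left _ φ.contDiff_normed hW.locallyIntegrable
  have hint : ∀ y, Integrable (fun t => φ.normed μ t * W (y - t)) μ := fun y =>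
    (φ.continuous_normed.mul (hW.comp (by fun_prop))).integrable_of_hasCompactSupport
      φ.hasCompactSupport_normed.mul_right
  refine fderiv_apply_le_of_forall_le (hdiff.differentiable one_ne_zero x) hτ₀ fun τ hτ => ?_
  simp only [convolution_def, ContinuousLinearMap.lsmul_apply, smul_eq_mul]
  have hq : τ * q = ∫ t, φ.normed μ t * (τ * q) ∂μ := by
    rw [integral_mul_const, φ.integral_normed, one_mul]
  have hintq := φ.integrable_normed.mul_const (μ := μ) (τ * q)
  rw [hq, ← integral_sub (hint x) hintq]
  refine integral_mono (hint _) ((hint x).sub hintq) fun t => ?_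
  rw [← mul_sub]
  by_cases ht : t ∈ Function.support (φ.normed μ)
  · refine mul_le_mul_of_nonneg_left ?_ (φ.nonneg_normed t)
    rw [φ.support_normed_eq, mem_ball_zero_iff] at ht
    have := hdec (x - t) (by simpa using ht.le.trans hφ) τ hτ
    rwa [sub_add_eq_add_sub] at this
  · rw [Function.notMem_support.1 ht, zero_mul, zero_mul]

lemma exists_contDiff_approx_closedBall (hW : Continuous W) (R : ℝ) {e : ℝ} (he : 0 < e)
    (hr : 0 < r) :
    ∃ U : E → ℝ, ContDiff ℝ ∞ U ∧ (∀ x, ‖x‖ ≤ R → |U x - W x| ≤ e) ∧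
      ∀ x v q, DecreasesNear W x v r q → fderiv ℝ U x v ≤ -q := by
  obtain ⟨d, hd, hWd⟩ := Metric.uniformContinuousOn_iff.1 ((isCompact_closedBall (0 : E) (R + 1)
    ).uniformContinuousOn_of_continuous hW.continuousOn) e he
  obtain ⟨ϱ, hϱ, hϱr⟩ : ∃ ϱ, 0 < ϱ ∧ ϱ ≤ 1 ∧ ϱ ≤ d ∧ ϱ ≤ r :=
    ⟨min 1 (min d r), by positivity, by simp⟩
  let φ : ContDiffBump (0 : E) := ⟨ϱ / 2, ϱ, half_pos hϱ, half_lt_self hϱ⟩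
  refine ⟨φ.normed (Measure.addHaar : Measure E) ⋆[ContinuousLinearMap.lsmul ℝ ℝ,
    Measure.addHaar] W, φ.hasCompactSupport_normed.contDiff_convolution_left _ φ.contDiff_normed
    hW.locallyIntegrable, fun x hx => ?_, fun x v q hdec =>
    hdec.fderiv_convolution_apply_le hW hϱr.2.2⟩
  refine φ.dist_normed_convolution_le hW.aestronglyMeasurable fun y hy => ?_
  have hyx : dist y x < ϱ := hy
  refine (hWd y ?_ x ?_ (hyx.trans_le hϱr.2.1)).le <;> rw [mem_closedBall_zero_iff]
  · rw [dist_eq_norm] at hyx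
    linarith [norm_le_norm_add_norm_sub' y x]
  · linarith

end Mollification

variable {E : Type*} [NormedAddCommGroup E] {U : ℕ → E → ℝ} {W : E → ℝ} {x v : E} {j : ℕ}
  {e D q : ℝ}

/-- The index of the spherical shell `j ≤ ‖x‖ ^ 2 < j + 1` containing `x`. -/
def shell (x : E) : ℕ := ⌊‖x‖ ^ 2⌋₊

lemma shell_le_norm_sq : (shell x : ℝ) ≤ ‖x‖ ^ 2 := Nat.floor_le (by positivity)

lemma norm_sq_lt_shell_add_one : ‖x‖ ^ 2 < shell x + 1 := Nat.lt_floor_add_one _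

lemma shell_eq_iff : shell x = j ↔ (j : ℝ) ≤ ‖x‖ ^ 2 ∧ ‖x‖ ^ 2 < j + 1 :=
  Nat.floor_eq_iff (by positivity)

lemma norm_lt_shell_add_one : ‖x‖ < shell x + 1 := by
  nlinarith [norm_sq_lt_shell_add_one (x := x), norm_nonneg x]

/-- A smooth function of `x` which rises from `0` to `1` inside the `j`-th shell. -/
def shellCutoff (j : ℕ) (x : E) : ℝ := Real.smoothTransition (3 * (‖x‖ ^ 2 - j) - 1)

lemma shellCutoff_of_le (hx : ‖x‖ ^ 2 ≤ j + 1 / 3) : shellCutoff j x = 0 :=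
  Real.smoothTransition.zero_of_nonpos (by linarith)

lemma shellCutoff_of_ge (hx : j + 2 / 3 ≤ ‖x‖ ^ 2) : shellCutoff j x = 1 :=
  Real.smoothTransition.one_of_one_le (by linarith)

lemma shellCutoff_mem_Icc : shellCutoff j x ∈ Icc 0 1 :=
  ⟨Real.smoothTransition.nonneg _, Real.smoothTransition.le_one _⟩

/-- The interpolation from `U j` to `U (j + 1)` across the `j`-th shell. The functions
`shellBlend U (j - 1)` and `shellBlend U j` both equal `U j` near the sphere `‖x‖ ^ 2 = j`, so
`fun x => shellBlend U (shell x) x` is a smooth function. -/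
def shellBlend (U : ℕ → E → ℝ) (j : ℕ) (x : E) : ℝ :=
  U j x + shellCutoff j x * (U (j + 1) x - U j x)

lemma shellBlend_shell_eventuallyEq (U : ℕ → E → ℝ) (x : E) :
    (fun y => shellBlend U (shell y) y) =ᶠ[𝓝 x] shellBlend U (shell x) := by
  have hcont : ContinuousAt (fun y : E => ‖y‖ ^ 2) x := by fun_prop
  filter_upwards [hcont.eventually (gt_mem_nhds norm_sq_lt_shell_add_one),
    hcont.eventually (lt_mem_nhds (show (shell x : ℝ) - 1 / 3 < ‖x‖ ^ 2 by
      linarith [shell_le_norm_sq (x := x)]))] with y hy_lt hy_gt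
  rcases le_or_gt (shell x : ℝ) (‖y‖ ^ 2) with hle | hlt
  · rw [shell_eq_iff.2 ⟨hle, hy_lt⟩]
  · obtain ⟨i, hi⟩ : ∃ i, shell x = i + 1 := Nat.exists_eq_succ_of_ne_zero fun h0 => by
      rw [h0, Nat.cast_zero] at hlt
      exact hlt.not_ge (by positivity)
    rw [hi, Nat.cast_add_one] at hlt hy_gt
    rw [hi, shell_eq_iff.2 ⟨by linarith, hlt⟩, shellBlend, shellBlend,
      shellCutoff_of_ge (by linarith), shellCutoff_of_le (by push_cast; linarith)]
    ring

lemma abs_shellBlend_sub_le (h₀ : |U j x - W x| ≤ e) (h₁ : |U (j + 1) x - W x| ≤ e) :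
    |shellBlend U j x - W x| ≤ e := by
  obtain ⟨hη0, hη1⟩ := shellCutoff_mem_Icc (j := j) (x := x)
  rw [shellBlend]
  rw [abs_le] at *
  constructor <;> nlinarith

variable [InnerProductSpace ℝ E]

lemma contDiff_shellCutoff : ContDiff ℝ ∞ (shellCutoff j : E → ℝ) :=
  Real.smoothTransition.contDiff.comp
    ((contDiff_const.mul ((contDiff_norm_sq ℝ).sub contDiff_const)).sub contDiff_const)

lemma contDiff_shellBlend (hU : ∀ j, ContDiff ℝ ∞ (U j)) : ContDiff ℝ ∞ (shellBlend U j) :=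
  (hU j).add (contDiff_shellCutoff.mul ((hU (j + 1)).sub (hU j)))

lemma contDiff_shellBlend_shell (hU : ∀ j, ContDiff ℝ ∞ (U j)) :
    ContDiff ℝ ∞ fun x => shellBlend U (shell x) x :=
  contDiff_iff_contDiffAt.2 fun x =>
    (contDiff_shellBlend hU).contDiffAt.congr_of_eventuallyEq (shellBlend_shell_eventuallyEq U x)

lemma fderiv_shellBlend_apply_le (hU : ∀ j, ContDiff ℝ ∞ (U j))
    (hD : ‖fderiv ℝ (shellCutoff j) x‖ ≤ D) (he : |U (j + 1) x - U j x| ≤ e)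
    (h₀ : fderiv ℝ (U j) x v ≤ -q) (h₁ : fderiv ℝ (U (j + 1)) x v ≤ -q) :
    fderiv ℝ (shellBlend U j) x v ≤ -q + e * (D * ‖v‖) := by
  have hU' : ∀ i, HasFDerivAt (U i) (fderiv ℝ (U i) x) x := fun i =>
    ((hU i).differentiable (by simp) x).hasFDerivAt
  have hη : HasFDerivAt (shellCutoff j) (fderiv ℝ (shellCutoff j) x) x :=
    (contDiff_shellCutoff.differentiable (by simp) x).hasFDerivAt
  have hderiv : fderiv ℝ (shellBlend U j) x v = fderiv ℝ (U j) x v +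
      (shellCutoff j x * (fderiv ℝ (U (j + 1)) x v - fderiv ℝ (U j) x v) +
        (U (j + 1) x - U j x) * fderiv ℝ (shellCutoff j) x v) := by
    have : HasFDerivAt (shellBlend U j) _ x :=
      (hU' j).add (hη.mul ((hU' (j + 1)).sub (hU' j)))
    rw [this.fderiv]
    simp
  have herr : (U (j + 1) x - U j x) * fderiv ℝ (shellCutoff j) x v ≤ e * (D * ‖v‖) := by
    have hDv : |fderiv ℝ (shellCutoff j) x v| ≤ D * ‖v‖ :=
      (fderiv ℝ (shellCutoff j) x).le_of_opNorm_le hD v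
    refine (le_abs_self _).trans ?_
    rw [abs_mul]
    exact mul_le_mul he hDv (abs_nonneg _) ((abs_nonneg _).trans he)
  obtain ⟨hη0, hη1⟩ := shellCutoff_mem_Icc (j := j) (x := x)
  rw [hderiv]
  nlinarith

variable [FiniteDimensional ℝ E]

lemma exists_norm_fderiv_shellCutoff_le (j : ℕ) :
    ∃ D, 0 ≤ D ∧ ∀ x : E, ‖x‖ ≤ j + 1 → ‖fderiv ℝ (shellCutoff j) x‖ ≤ D := by
  obtain ⟨D, hD⟩ := (isCompact_closedBall (0 : E) (j + 1)).exists_bound_of_continuousOn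
    (contDiff_shellCutoff.continuous_fderiv (by simp)).continuousOn
  exact ⟨D, (norm_nonneg _).trans (hD 0 (Metric.mem_closedBall_self (by positivity))),
    fun x hx => hD x (by simpa)⟩

lemma exists_contDiff_approx_shell (hW : Continuous W) {r δ : ℕ → ℝ}
    (hr : ∀ j, 0 < r j) (hδ : ∀ j, 0 < δ j) :
    ∃ U : E → ℝ, ContDiff ℝ ∞ U ∧ (∀ x, |U x - W x| ≤ δ (shell x)) ∧
      ∀ x v q, DecreasesNear W x v (r (shell x)) q →
        fderiv ℝ U x v ≤ -q + δ (shell x) * ‖v‖ := by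
  borelize E
  choose D hD0 hD using fun j => exists_norm_fderiv_shellCutoff_le (E := E) j
  obtain ⟨r', hr'anti, hr', hr'r⟩ := exists_antitone_pos_le hr
  obtain ⟨e, heanti, he, heδ⟩ := exists_antitone_pos_le (b := fun j => δ j / (2 * (1 + D j)))
    fun j => div_pos (hδ j) (by linarith [hD0 j])
  choose U hU hUW hUv using fun j : ℕ =>
    exists_contDiff_approx_closedBall hW (j + 1) (he j) (hr' j)
  have heδD : ∀ j, 2 * e j * (1 + D j) ≤ δ j := fun j => by
    have := (le_div_iff₀ (by linarith [hD0 j])).1 (heδ j)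
    linarith
  have happrox : ∀ x, |U (shell x) x - W x| ≤ e (shell x) ∧
      |U (shell x + 1) x - W x| ≤ e (shell x) := fun x =>
    ⟨hUW _ x norm_lt_shell_add_one.le, (hUW (shell x + 1) x (by
      push_cast; linarith [norm_lt_shell_add_one (x := x)])).trans (heanti (Nat.le_succ _))⟩
  refine ⟨fun x => shellBlend U (shell x) x, contDiff_shellBlend_shell hU, fun x => ?_,
    fun x v q hdec => ?_⟩
  · refine (abs_shellBlend_sub_le (happrox x).1 (happrox x).2).trans ?_
    nlinarith [heδD (shell x), he (shell x), hD0 (shell x)]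
  · have hdiff : |U (shell x + 1) x - U (shell x) x| ≤ 2 * e (shell x) := by
      linarith [abs_sub_le (U (shell x + 1) x) (W x) (U (shell x) x), (happrox x).1,
        (happrox x).2, abs_sub_comm (W x) (U (shell x) x)]
    rw [(shellBlend_shell_eventuallyEq U x).fderiv_eq]
    refine (fderiv_shellBlend_apply_le hU (hD _ x norm_lt_shell_add_one.le) hdiff
      (hUv _ x v q (hdec.mono (hr'r _)))
      (hUv _ x v q (hdec.mono ((hr'anti (Nat.le_succ _)).trans (hr'r _))))).trans ?_
    rw [← mul_assoc]
    gcongr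
    linarith [heδD (shell x), he (shell x)]

end Smoothing

/-! ### Smooth series -/

section SmoothSeries

lemma exists_pos_summable_mul {B : ℕ → ℕ → ℝ} (hB : ∀ i k, 0 ≤ B i k) :
    ∃ a : ℕ → ℝ, (∀ k, 0 < a k) ∧ (∀ k, a k ≤ 1 / 2 / 2 ^ k) ∧
      ∀ i, Summable fun k => a k * B i k := by
  set S : ℕ → ℝ := fun k => ∑ i ∈ Finset.range (k + 1), B i k
  have hS : ∀ k, 0 ≤ S k := fun k => Finset.sum_nonneg fun i _ => hB i k
  have hpos : ∀ k, 0 < 1 / 2 / 2 ^ k / (1 + S k) := fun k =>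
    div_pos (by positivity) (by linarith [hS k])
  have hS_mul : ∀ k, 1 / 2 / 2 ^ k / (1 + S k) * (1 + S k) = 1 / 2 / 2 ^ k := fun k =>
    div_mul_cancel₀ _ (by linarith [hS k])
  refine ⟨fun k => 1 / 2 / 2 ^ k / (1 + S k), hpos, fun k =>
    div_le_self (by positivity) (by linarith [hS k]), fun i => ?_⟩
  refine Summable.of_norm_bounded_eventually_nat (summable_geometric_two' 1) ?_
  filter_upwards [eventually_ge_atTop i] with k hk
  have hBS : B i k ≤ S k := Finset.single_le_sum (f := fun i => B i k) (fun i _ => hB i k)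
    (Finset.mem_range.2 (Nat.lt_succ_of_le hk))
  rw [Real.norm_of_nonneg (mul_nonneg (hpos k).le (hB i k))]
  exact (mul_le_mul_of_nonneg_left (by linarith : B i k ≤ 1 + S k) (hpos k).le).trans_eq
    (hS_mul k)

section SmoothlySummable

variable {E : Type*} [NormedAddCommGroup E] [NormedSpace ℝ E] {F : ℕ → E → ℝ} {x : E}

/-- Near `x` the functions `F k` agree with globally defined smooth functions, all of whose
derivatives are bounded by summable constants; so `∑' k, F k` is smooth at `x` and may be
differentiated termwise. -/
def SmoothlySummableAt (F : ℕ → E → ℝ) (x : E) : Prop :=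
  ∃ (G : ℕ → E → ℝ) (B : ℕ → ℕ → ℝ), (∀ k, ContDiff ℝ ∞ (G k)) ∧ (∀ i, Summable (B i)) ∧
    (∀ i k y, ‖iteratedFDeriv ℝ i (G k) y‖ ≤ B i k) ∧ ∀ᶠ y in 𝓝 x, ∀ k, F k y = G k y

namespace SmoothlySummableAt

lemma summable (hF : SmoothlySummableAt F x) : Summable fun k => F k x := by
  obtain ⟨G, B, -, hB, hGB, hFG⟩ := hF
  exact Summable.of_norm_bounded (hB 0) fun k => by
    simpa only [norm_iteratedFDeriv_zero, hFG.self_of_nhds k] using hGB 0 k x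

lemma contDiffAt_tsum (hF : SmoothlySummableAt F x) : ContDiffAt ℝ ∞ (fun y => ∑' k, F k y) x := by
  obtain ⟨G, B, hG, hB, hGB, hFG⟩ := hF
  have hG_tsum : ContDiff ℝ ∞ fun y => ∑' k, G k y :=
    contDiff_tsum hG (fun i _ => hB i) fun i k y _ => hGB i k y
  exact hG_tsum.contDiffAt.congr_of_eventuallyEq (hFG.mono fun y hy => tsum_congr hy)

lemma hasSum_fderiv_apply (hF : SmoothlySummableAt F x) (v : E) :
    HasSum (fun k => fderiv ℝ (F k) x v) (fderiv ℝ (fun y => ∑' k, F k y) x v) := by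
  have hsum := hF.summable
  obtain ⟨G, B, hG, hB, hGB, hFG⟩ := hF
  have hGB1 : ∀ k y, ‖fderiv ℝ (G k) y‖ ≤ B 1 k := fun k y => by
    simpa only [norm_iteratedFDeriv_one] using hGB 1 k y
  have hderiv := hasFDerivAt_tsum (hB 1)
    (fun k y => ((hG k).differentiable (by simp) y).hasFDerivAt) hGB1
    (hsum.congr fun k => hFG.self_of_nhds k) x
  have hFG_tsum : (fun y => ∑' k, F k y) =ᶠ[𝓝 x] fun y => ∑' k, G k y :=
    hFG.mono fun y hy => tsum_congr hy
  have hFG_fderiv : ∀ k, fderiv ℝ (F k) x = fderiv ℝ (G k) x := fun k =>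
    EventuallyEq.fderiv_eq (hFG.mono fun y hy => hy k)
  rw [hFG_tsum.fderiv_eq, hderiv.fderiv]
  simp only [hFG_fderiv]
  exact (ContinuousLinearMap.apply ℝ ℝ v).hasSum
    (Summable.of_norm_bounded (hB 1) fun k => hGB1 k x).hasSum

end SmoothlySummableAt

variable [FiniteDimensional ℝ E] [HasContDiffBump E]

lemma exists_norm_iteratedFDeriv_bump_mul_le {ψ : E → ℝ} (hψ : ContDiff ℝ ∞ ψ) {c : E}
    (φ : ContDiffBump c) (i : ℕ) :
    ∃ B, 0 ≤ B ∧ ∀ x, ‖iteratedFDeriv ℝ i (fun x => φ x * ψ x) x‖ ≤ B := by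
  obtain ⟨B, hB⟩ := ((φ.hasCompactSupport.mul_right (f' := ψ)).iteratedFDeriv (𝕜 := ℝ) i
    ).exists_bound_of_continuous
      ((φ.contDiff.mul hψ).continuous_iteratedFDeriv (by exact_mod_cast le_top))
  exact ⟨B, (norm_nonneg _).trans (hB 0), hB⟩

lemma exists_smoothlySummableAt_mul {ψ : ℕ → E → ℝ} (hψ : ∀ k, ContDiff ℝ ∞ (ψ k)) :
    ∃ a : ℕ → ℝ, (∀ k, 0 < a k) ∧ (∀ k, a k ≤ 1 / 2 / 2 ^ k) ∧
      ∀ x, SmoothlySummableAt (fun k y => a k * ψ k y) x := by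
  let φ : ℕ → ContDiffBump (0 : E) := fun j => ⟨j + 1, j + 2, by positivity, by linarith⟩
  choose B hB0 hB using fun j i k => exists_norm_iteratedFDeriv_bump_mul_le (hψ k) (φ j) i
  have hφψ : ∀ j k, ContDiff ℝ ∞ fun x => φ j x * ψ k x := fun j k => (φ j).contDiff.mul (hψ k)
  obtain ⟨a, ha, ha_le, hsum⟩ := exists_pos_summable_mul
    (B := fun ij k => B ij.unpair.1 ij.unpair.2 k) fun ij k => hB0 _ _ k
  refine ⟨a, ha, ha_le, fun x => ⟨fun k y => a k * (φ (shell x) y * ψ k y),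
    fun i k => a k * B (shell x) i k, fun k => contDiff_const.mul (hφψ _ k), fun i => ?_,
    fun i k y => ?_, ?_⟩⟩
  · simpa using hsum (Nat.pair (shell x) i)
  · change ‖iteratedFDeriv ℝ i (a k • fun y => φ (shell x) y * ψ k y) y‖ ≤ _
    rw [iteratedFDeriv_const_smul_apply ((hφψ _ k).contDiffAt.of_le (by exact_mod_cast le_top)),
      norm_smul, Real.norm_of_nonneg (ha k).le]
    exact mul_le_mul_of_nonneg_left (hB _ i k y) (ha k).le
  · filter_upwards [(φ (shell x)).eventuallyEq_one_of_mem_ball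
      (mem_ball_zero_iff.2 norm_lt_shell_add_one)] with y hy k
    rw [hy, Pi.one_apply, one_mul]

end SmoothlySummable

end SmoothSeries

/-! ### Trajectories of a bounded-input bounded-state system -/

section System

variable {n m p : ℕ}
  {f : EuclideanSpace ℝ (Fin n) → EuclideanSpace ℝ (Fin m) → EuclideanSpace ℝ (Fin n)}
  {h : EuclideanSpace ℝ (Fin n) → EuclideanSpace ℝ (Fin p)}
  {x : ℝ → EuclideanSpace ℝ (Fin n) → (ℝ → EuclideanSpace ℝ (Fin m)) → EuclideanSpace ℝ (Fin n)}
  {u : ℝ → EuclideanSpace ℝ (Fin m)} {μ : EuclideanSpace ℝ (Fin m)}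
  {ξ : EuclideanSpace ℝ (Fin n)} {c c' t τ : ℝ}

/-- `u` is an admissible input whose essential supremum norm is at most `c`. -/
structure IsInputWithin (u : ℝ → EuclideanSpace ℝ (Fin m)) (c : ℝ) : Prop where
  measurable : Measurable u
  ae_norm_le : ∀ᵐ s ∂volume.restrict (Ici (0 : ℝ)), ‖u s‖ ≤ c

namespace IsInputWithin

lemma isInput (hu : IsInputWithin u c) : IsInput u :=
  ⟨hu.measurable, fun _ _ =>
    ⟨c, ae_restrict_of_ae_restrict_of_subset Icc_subset_Ici_self hu.ae_norm_le⟩⟩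

lemma uNormE_le (hu : IsInputWithin u c) : uNormE u ≤ ENNReal.ofReal c := by
  refine essSup_le_of_ae_le _ (hu.ae_norm_le.mono fun s hs => ?_)
  simpa only [ofReal_norm, enorm_eq_nnnorm] using ENNReal.ofReal_le_ofReal hs

lemma bddInput (hu : IsInputWithin u c) : BddInput u :=
  ne_top_of_le_ne_top ENNReal.ofReal_ne_top hu.uNormE_le

lemma uNorm_le (hu : IsInputWithin u c) (hc : 0 ≤ c) : uNorm u ≤ c :=
  ENNReal.toReal_le_of_le_ofReal hc hu.uNormE_le

lemma mono (hu : IsInputWithin u c) (hc : c ≤ c') : IsInputWithin u c' :=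
  ⟨hu.measurable, hu.ae_norm_le.mono fun _ hs => hs.trans hc⟩

lemma ae_imp_norm_le (hu : IsInputWithin u c) : ∀ᵐ s : ℝ, 0 ≤ s → ‖u s‖ ≤ c :=
  ae_imp_of_ae_restrict hu.ae_norm_le

end IsInputWithin

lemma isInputWithin_const (hμ : ‖μ‖ ≤ c) : IsInputWithin (fun _ => μ) c :=
  ⟨measurable_const, ae_of_all _ fun _ => hμ⟩

lemma isInputWithin_uNorm (hu : IsInput u) (hb : BddInput u) : IsInputWithin u (uNorm u) := by
  refine ⟨hu.1, ?_⟩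
  filter_upwards [ENNReal.ae_le_essSup (μ := volume.restrict (Ici (0 : ℝ)))
    fun t => (‖u t‖₊ : ℝ≥0∞)] with s hs
  simpa [uNorm, uNormE] using ENNReal.toReal_mono hb hs

lemma uNorm_nonneg : 0 ≤ uNorm u := ENNReal.toReal_nonneg

/-- The input equal to the constant `μ` up to time `τ`, followed by `u`. -/
def concatInput (τ : ℝ) (μ : EuclideanSpace ℝ (Fin m)) (u : ℝ → EuclideanSpace ℝ (Fin m)) :
    ℝ → EuclideanSpace ℝ (Fin m) :=
  fun s => if s ≤ τ then μ else u (s - τ)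

lemma concatInput_of_le {s : ℝ} (hs : s ≤ τ) : concatInput τ μ u s = μ := if_pos hs

lemma concatInput_add {s : ℝ} (hs : 0 < s) : concatInput τ μ u (s + τ) = u s := by
  rw [concatInput, if_neg (by linarith), add_sub_cancel_right]

lemma IsInputWithin.concat (hu : IsInputWithin u c) (hμ : ‖μ‖ ≤ c) :
    IsInputWithin (concatInput τ μ u) c := by
  refine ⟨Measurable.ite measurableSet_Iic measurable_const
    (hu.measurable.comp (measurable_id.sub_const τ)), ae_restrict_of_ae ?_⟩
  filter_upwards [(measurePreserving_sub_right volume τ).quasiMeasurePreserving.ae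
    hu.ae_imp_norm_le] with s hs
  unfold concatInput
  split_ifs with hsτ
  · exact hμ
  · exact hs (by linarith)

lemma exists_lipschitz_of_norm_le (hf : LocallyLipschitz (Function.uncurry f)) (S c : ℝ) :
    ∃ M : ℝ, 0 ≤ M ∧
      ∀ a b μ, ‖a‖ ≤ S → ‖b‖ ≤ S → ‖μ‖ ≤ c → ‖f a μ - f b μ‖ ≤ M * ‖a - b‖ := by
  obtain ⟨K, hK⟩ := (hf.locallyLipschitzOn (s := Metric.closedBall 0 S ×ˢ Metric.closedBall 0 c)
    ).exists_lipschitzOnWith_of_compact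
      ((isCompact_closedBall _ _).prod (isCompact_closedBall _ _))
  refine ⟨K, K.2, fun a b μ ha hb hμ => ?_⟩
  have := hK.dist_le_mul (a, μ) (by simp [ha, hμ]) (b, μ) (by simp [hb, hμ])
  simpa [Prod.dist_eq, dist_eq_norm] using this

lemma exists_norm_le_of_norm_le (hf : Continuous (Function.uncurry f)) (S c : ℝ) :
    ∃ B : ℝ, 0 ≤ B ∧ ∀ a μ, ‖a‖ ≤ S → ‖μ‖ ≤ c → ‖f a μ‖ ≤ B := by
  obtain ⟨B, hB⟩ := ((isCompact_closedBall (0 : EuclideanSpace ℝ (Fin n)) S).prod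
    (isCompact_closedBall (0 : EuclideanSpace ℝ (Fin m)) c)).exists_bound_of_continuousOn
      hf.continuousOn
  exact ⟨max B 0, le_max_right _ _, fun a μ ha hμ =>
    (hB (a, μ) (by simp [ha, hμ])).trans (le_max_left _ _)⟩

lemma exists_norm_sub_le_mul_exp (hf : LocallyLipschitz (Function.uncurry f)) (S c : ℝ) :
    ∃ M : ℝ, 0 ≤ M ∧ ∀ z₁ z₂ u t, 0 ≤ t → IsInputWithin u c →
      HasVelocityOn z₁ (fun s => f (z₁ s) (u s)) 0 t → (∀ s ∈ Icc 0 t, ‖z₁ s‖ ≤ S) →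
      HasVelocityOn z₂ (fun s => f (z₂ s) (u s)) 0 t → (∀ s ∈ Icc 0 t, ‖z₂ s‖ ≤ S) →
      ‖z₁ t - z₂ t‖ ≤ ‖z₁ 0 - z₂ 0‖ * Real.exp (M * t) := by
  obtain ⟨M, hM, hL⟩ := exists_lipschitz_of_norm_le hf S c
  refine ⟨M, hM, fun z₁ z₂ u t ht hu hz₁ hS₁ hz₂ hS₂ => ?_⟩
  have := (hz₁.sub hz₂).norm_le_mul_exp hM (hu.ae_imp_norm_le.mono fun s hs hsm =>
    hL _ _ _ (hS₁ s ⟨hsm.1.le, hsm.2⟩) (hS₂ s ⟨hsm.1.le, hsm.2⟩) (hs hsm.1.le)) ⟨ht, le_rfl⟩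
  rwa [sub_zero] at this

namespace IsBIBS

lemma apply_zero (hB : IsBIBS f x) (hu : IsInputWithin u c) : x 0 ξ u = ξ := by
  rw [hB.1 ξ u hu.isInput 0 self_mem_Ici, intervalIntegral.integral_same, add_zero]

lemma exists_norm_le (hB : IsBIBS f x) (R : ℝ) {c : ℝ} (hc : 0 ≤ c) :
    ∃ S, ∀ ξ u t, ‖ξ‖ ≤ R → IsInputWithin u c → 0 ≤ t → ‖x t ξ u‖ ≤ S := by
  obtain ⟨σ, hσK, hσ⟩ := hB.2
  exact ⟨max (σ R) (σ c), fun ξ u t hξ hu ht => (hσ ξ u hu.isInput hu.bddInput t ht).trans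
    (max_le_max (hσK.mono (norm_nonneg _) hξ) (hσK.mono uNorm_nonneg (hu.uNorm_le hc)))⟩

lemma exists_norm_velocity_le (hf : Continuous (Function.uncurry f)) (hB : IsBIBS f x) (R : ℝ)
    {c : ℝ} (hc : 0 ≤ c) :
    ∃ B, 0 ≤ B ∧ ∀ ξ u, ‖ξ‖ ≤ R → IsInputWithin u c →
      ∀ᵐ s : ℝ, 0 ≤ s → ‖f (x s ξ u) (u s)‖ ≤ B := by
  obtain ⟨S, hS⟩ := hB.exists_norm_le R hc
  obtain ⟨B, hB0, hBf⟩ := exists_norm_le_of_norm_le hf S c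
  exact ⟨B, hB0, fun ξ u hξ hu => hu.ae_imp_norm_le.mono fun s hs hs0 =>
    hBf _ _ (hS ξ u s hξ hu hs0) (hs hs0)⟩

lemma hasVelocityOn (hf : Continuous (Function.uncurry f)) (hB : IsBIBS f x)
    (hu : IsInputWithin u c) (hc : 0 ≤ c) (ξ : EuclideanSpace ℝ (Fin n)) (ht : 0 ≤ t) :
    HasVelocityOn (fun s => x s ξ u) (fun s => f (x s ξ u) (u s)) 0 t where
  intervalIntegrable := by
    obtain ⟨B, -, hBF⟩ := hB.exists_norm_velocity_le hf ‖ξ‖ hc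
    exact intervalIntegrable_of_integral_equation (hB.1 ξ u hu.isInput)
      (fun hx => hf.comp_aestronglyMeasurable (hx.prodMk hu.measurable.aestronglyMeasurable))
      ((ae_restrict_iff' measurableSet_Ici).2 (hBF ξ u le_rfl hu)) ht
  eq_add_integral s hs := by
    rw [hB.apply_zero hu]
    exact hB.1 ξ u hu.isInput s hs.1

lemma eq_of_hasVelocityOn (hf : LocallyLipschitz (Function.uncurry f)) (hB : IsBIBS f x)
    (hu : IsInputWithin u c) (hc : 0 ≤ c) {z : ℝ → EuclideanSpace ℝ (Fin n)}
    (hz : HasVelocityOn z (fun s => f (z s) (u s)) 0 t) (ht : 0 ≤ t) : x t (z 0) u = z t := by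
  obtain ⟨S₁, hS₁⟩ := hB.exists_norm_le ‖z 0‖ hc
  obtain ⟨S₂, hS₂⟩ := isCompact_Icc.exists_bound_of_continuousOn hz.continuousOn
  obtain ⟨M, -, hM⟩ := exists_norm_sub_le_mul_exp hf (max S₁ S₂) c
  have := hM _ z u t ht hu (hB.hasVelocityOn hf.continuous hu hc (z 0) ht)
    (fun s hs => (hS₁ _ u s le_rfl hu hs.1).trans (le_max_left _ _)) hz
    fun s hs => (hS₂ s hs).trans (le_max_right _ _)
  rwa [hB.apply_zero hu, sub_self, norm_zero, zero_mul, norm_le_zero_iff, sub_eq_zero] at this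

lemma apply_concatInput (hf : LocallyLipschitz (Function.uncurry f)) (hB : IsBIBS f x)
    (hu : IsInputWithin u c) (hμ : ‖μ‖ ≤ c) (hτ : 0 ≤ τ) (ht : 0 ≤ t)
    (ξ : EuclideanSpace ℝ (Fin n)) :
    x (t + τ) ξ (concatInput τ μ u) = x t (x τ ξ fun _ => μ) u := by
  have hc : 0 ≤ c := (norm_nonneg μ).trans hμ
  have hv : IsInputWithin (concatInput τ μ u) c := hu.concat hμ
  have hvel := hB.hasVelocityOn hf.continuous hv hc ξ (add_nonneg ht hτ)
  have hinit : x τ ξ (fun _ => μ) = x τ ξ (concatInput τ μ u) := by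
    have := hB.eq_of_hasVelocityOn hf (isInputWithin_const hμ) hc
      ((hvel.mono le_rfl hτ (le_add_of_nonneg_left ht)).congr
        (fun s hs => by simp only [concatInput_of_le hs.2]) hτ) hτ
    rwa [hB.apply_zero hv] at this
  have htail : HasVelocityOn (fun s => x (s + τ) ξ (concatInput τ μ u))
      (fun s => f (x (s + τ) ξ (concatInput τ μ u)) (concatInput τ μ u (s + τ))) 0 t :=
    (hvel.mono (by simpa) (by simpa) le_rfl).comp_add_right
  have := hB.eq_of_hasVelocityOn hf hu hc
    (htail.congr (fun s hs => by simp only [concatInput_add hs.1]) ht) ht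
  rw [hinit, ← this, zero_add]

lemma exists_norm_output_sub_le (hf : LocallyLipschitz (Function.uncurry f))
    (hh : LocallyLipschitz h) (hB : IsBIBS f x) (R T : ℝ) {c : ℝ} (hc : 0 ≤ c) :
    ∃ L, 0 ≤ L ∧ ∀ ξ ξ' u t, ‖ξ‖ ≤ R → ‖ξ'‖ ≤ R → IsInputWithin u c → t ∈ Icc 0 T →
      ‖h (x t ξ u) - h (x t ξ' u)‖ ≤ L * ‖ξ - ξ'‖ := by
  obtain ⟨S, hS⟩ := hB.exists_norm_le R hc
  obtain ⟨M, hM0, hM⟩ := exists_norm_sub_le_mul_exp hf S c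
  obtain ⟨K, hK⟩ := (hh.locallyLipschitzOn (s := Metric.closedBall 0 S)
    ).exists_lipschitzOnWith_of_compact (isCompact_closedBall _ _)
  refine ⟨K * Real.exp (M * T), by positivity, fun ξ ξ' u t hξ hξ' hu ht => ?_⟩
  have hx := hM _ _ u t ht.1 hu (hB.hasVelocityOn hf.continuous hu hc ξ ht.1)
    (fun s hs => hS ξ u s hξ hu hs.1) (hB.hasVelocityOn hf.continuous hu hc ξ' ht.1)
    fun s hs => hS ξ' u s hξ' hu hs.1
  simp only [hB.apply_zero hu] at hx
  calc ‖h (x t ξ u) - h (x t ξ' u)‖ ≤ K * ‖x t ξ u - x t ξ' u‖ := by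
        simpa only [dist_eq_norm] using hK.dist_le_mul _
          (mem_closedBall_zero_iff.2 (hS ξ u t hξ hu ht.1)) _
          (mem_closedBall_zero_iff.2 (hS ξ' u t hξ' hu ht.1))
    _ ≤ K * (‖ξ - ξ'‖ * Real.exp (M * T)) := by
        gcongr
        refine hx.trans ?_
        gcongr
        exact ht.2
    _ = K * Real.exp (M * T) * ‖ξ - ξ'‖ := by ring

lemma exists_norm_euler_sub_le (hf : LocallyLipschitz (Function.uncurry f)) (hB : IsBIBS f x)
    (R : ℝ) {c : ℝ} (hc : 0 ≤ c) {η : ℝ} (hη : 0 < η) :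
    ∃ r, 0 < r ∧ r ≤ 1 ∧ ∀ a y μ τ, ‖a‖ ≤ R → ‖y - a‖ ≤ r → ‖μ‖ ≤ c → 0 ≤ τ → τ ≤ r →
      ‖(y + τ • f a μ) - x τ y fun _ => μ‖ ≤ η * τ := by
  obtain ⟨S, hS⟩ := hB.exists_norm_le (R + 1) hc
  obtain ⟨M, hM0, hM⟩ := exists_lipschitz_of_norm_le hf (max R S) c
  obtain ⟨B, hB0, hBF⟩ := hB.exists_norm_velocity_le hf.continuous (R + 1) hc
  have hden : 0 < M * (1 + B) + 1 := by positivity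
  refine ⟨min 1 (η / (M * (1 + B) + 1)), by positivity, min_le_left _ _,
    fun a y μ τ ha hy hμ hτ hτr => ?_⟩
  set r := min 1 (η / (M * (1 + B) + 1))
  have hyR : ‖y‖ ≤ R + 1 := by
    linarith [norm_le_norm_add_norm_sub' y a, hy.trans (min_le_left _ _)]
  have hμc := isInputWithin_const hμ
  have hx := hB.hasVelocityOn hf.continuous hμc hc y hτ
  have hlin : HasVelocityOn (fun s => y + s • f a μ) (fun _ => f a μ) 0 τ :=
    ⟨intervalIntegrable_const, fun t _ => by simp⟩
  have hxa : ∀ s ∈ Icc 0 τ, ‖a - x s y fun _ => μ‖ ≤ (1 + B) * r := fun s hs => by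
    have hxy : ‖x s y (fun _ => μ) - y‖ ≤ B * r := by
      have := hx.norm_sub_le ((hBF y _ hyR hμc).mono fun s hs hsm => hs hsm.1.le) le_rfl hs.1 hs.2
      rw [hB.apply_zero hμc, sub_zero] at this
      exact this.trans (mul_le_mul_of_nonneg_left (hs.2.trans hτr) hB0)
    rw [norm_sub_rev]
    linarith [norm_sub_le_norm_sub_add_norm_sub (x s y fun _ => μ) y a]
  have hvel : ∀ s ∈ Ioc 0 τ, ‖f a μ - f (x s y fun _ => μ) μ‖ ≤ η := fun s hs => by
    calc ‖f a μ - f (x s y fun _ => μ) μ‖ ≤ M * ‖a - x s y fun _ => μ‖ :=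
          hM _ _ _ (ha.trans (le_max_left _ _))
            ((hS y _ s hyR hμc hs.1.le).trans (le_max_right _ _)) hμ
      _ ≤ M * ((1 + B) * r) := by gcongr; exact hxa s ⟨hs.1.le, hs.2⟩
      _ ≤ (M * (1 + B) + 1) * r := by nlinarith [hτ.trans hτr]
      _ ≤ η := (le_div_iff₀' hden).1 (min_le_right _ _)
  have := (hlin.sub hx).norm_sub_le (ae_of_all _ hvel) le_rfl hτ le_rfl
  simpa [hB.apply_zero hμc] using this

lemma exists_euler_step_le (hf : LocallyLipschitz (Function.uncurry f)) (hB : IsBIBS f x)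
    {W : EuclideanSpace ℝ (Fin n) → ℝ} (hW : LocallyLipschitz W) (R : ℝ) {c : ℝ} (hc : 0 ≤ c)
    {δ : ℝ} (hδ : 0 < δ) :
    ∃ r, 0 < r ∧ r ≤ 1 ∧ ∀ a y μ τ, ‖a‖ ≤ R → ‖y - a‖ ≤ r → ‖μ‖ ≤ c → 0 ≤ τ → τ ≤ r →
      W (y + τ • f a μ) ≤ W (x τ y fun _ => μ) + δ * τ := by
  obtain ⟨S, hS⟩ := hB.exists_norm_le (R + 1) hc
  obtain ⟨K, hK⟩ := (hW.locallyLipschitzOn (s := Metric.closedBall 0 (S + δ))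
    ).exists_lipschitzOnWith_of_compact (isCompact_closedBall _ _)
  obtain ⟨r, hr, hr1, hr_euler⟩ := hB.exists_norm_euler_sub_le hf R hc
    (show 0 < δ / (K + 1) by positivity)
  refine ⟨r, hr, hr1, fun a y μ τ ha hy hμ hτ hτr => ?_⟩
  have heuler := hr_euler a y μ τ ha hy hμ hτ hτr
  have hstep : δ / (K + 1) * τ ≤ δ :=
    calc δ / (K + 1) * τ ≤ δ * 1 := by
          gcongr
          · exact div_le_self hδ.le (by simp)
          · exact hτr.trans hr1
      _ = δ := mul_one δ
  have hx : ‖x τ y fun _ => μ‖ ≤ S := hS y _ τ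
    (by linarith [norm_le_norm_add_norm_sub' y a]) (isInputWithin_const hμ) hτ
  have hdist := hK.dist_le_mul (y + τ • f a μ) (mem_closedBall_zero_iff.2 (by
    linarith [norm_le_norm_add_norm_sub' (y + τ • f a μ) (x τ y fun _ => μ)]))
    (x τ y fun _ => μ) (mem_closedBall_zero_iff.2 (by linarith))
  rw [Real.dist_eq, dist_eq_norm] at hdist
  have hKδ : (K : ℝ) * (δ / (K + 1) * τ) ≤ δ * τ := by
    rw [← mul_assoc]
    gcongr
    rw [mul_div_assoc', div_le_iff₀ (by positivity)]
    nlinarith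
  linarith [le_abs_self (W (y + τ • f a μ) - W (x τ y fun _ => μ)),
    mul_le_mul_of_nonneg_left heuler K.coe_nonneg]

end IsBIBS

/-! ### Lyapunov functions imply stability -/

lemma IsBIBS.add_mul_le_of_fderiv_le (hf : LocallyLipschitz (Function.uncurry f))
    (hB : IsBIBS f x) {V : EuclideanSpace ℝ (Fin n) → ℝ} (hV : ContDiff ℝ 1 V) {χ α : ℝ → ℝ}
    (hχ : IsClassK χ) (hα : IsClassK α)
    (hdec : ∀ ξ μ, χ ‖μ‖ ≤ V ξ → fderiv ℝ V ξ (f ξ μ) ≤ -α (V ξ)) (hu : IsInputWithin u c)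
    (hc : 0 ≤ c) (ht : 0 ≤ t) (hlt : χ c < V (x t ξ u)) :
    V (x t ξ u) + t * α (V (x t ξ u)) ≤ V ξ := by
  have hvel := hB.hasVelocityOn hf.continuous hu hc ξ ht
  obtain ⟨B, -, hBF⟩ := hB.exists_norm_velocity_le hf.continuous ‖ξ‖ hc
  have hχc : ∀ k, χ c ≤ k → 0 ≤ k := fun k hk => (hχ.nonneg hc).trans hk
  have hstep : ∀ a b k, 0 ≤ a → a ≤ b → b ≤ t → χ c ≤ k →
      (∀ s ∈ Ioo a b, k ≤ V (x s ξ u)) → V (x b ξ u) - V (x a ξ u) ≤ -α k * (b - a) := by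
    intro a b k ha hab hbt hck hk
    refine (hvel.mono ha hab hbt).sub_le_of_fderiv_le hab
      ((hBF ξ u le_rfl hu).mono fun s hs hsm => hs (ha.trans hsm.1.le)) hV ?_
    filter_upwards [hu.ae_imp_norm_le] with s hs hsm
    have hμ : χ ‖u s‖ ≤ V (x s ξ u) :=
      ((hχ.mono (norm_nonneg _) (hs (ha.trans hsm.1.le))).trans hck).trans (hk s hsm)
    exact (hdec _ _ hμ).trans (neg_le_neg (hα.mono (hχc k hck) (hk s hsm)))
  have := add_mul_le_of_forall_sub_le ht (hV.continuous.comp_continuousOn hvel.continuousOn)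
    (fun k hk => hα.nonneg (hχc k hk)) hstep hlt
  simpa [hB.apply_zero hu] using this

lemma IsSIIOSLyapunov.isSIIOS (hf : LocallyLipschitz (Function.uncurry f)) (hB : IsBIBS f x)
    {V : EuclideanSpace ℝ (Fin n) → ℝ} (hL : IsSIIOSLyapunov f h V) : IsSIIOS h x := by
  obtain ⟨hV, hV0, ⟨α₁, α₂, hα₁, hα₂, hVh⟩, χ, α₃, hχ, hα₃, hdec⟩ := hL
  obtain ⟨e, he0, he⟩ := hα₁.exists_orderIso
  have he_symm := (isClassKInfty_orderIso_symm e he0).1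
  obtain ⟨β, hβ, hβV⟩ := hα₃.exists_isClassKL_of_add_mul_le
  refine ⟨fun s t => e.symm (β (α₂ s) t), fun s => e.symm (χ s), hβ.comp he_symm hα₂.1,
    he_symm.comp hχ, fun ξ u hu hb t ht => ?_⟩
  have ht : 0 ≤ t := ht
  rw [← e.symm.monotone.map_max, OrderIso.le_symm_apply, he _ (norm_nonneg _)]
  refine (hVh _).1.trans (le_max_iff.2 (or_iff_not_imp_right.2 fun hlt => ?_))
  have hdecay := hB.add_mul_le_of_fderiv_le hf (hV.of_le (by simp)) hχ hα₃ hdec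
    (isInputWithin_uNorm hu hb) uNorm_nonneg ht (not_le.1 hlt)
  exact hβV _ _ _ (hV0 _) ht (hdecay.trans (hVh ξ).2)

end System

/-! ### The open-loop value function -/

section OpenLoop

variable {n m p : ℕ}
  {f : EuclideanSpace ℝ (Fin n) → EuclideanSpace ℝ (Fin m) → EuclideanSpace ℝ (Fin n)}
  {h : EuclideanSpace ℝ (Fin n) → EuclideanSpace ℝ (Fin p)}
  {x : ℝ → EuclideanSpace ℝ (Fin n) → (ℝ → EuclideanSpace ℝ (Fin m)) → EuclideanSpace ℝ (Fin n)}
  {u : ℝ → EuclideanSpace ℝ (Fin m)} {μ : EuclideanSpace ℝ (Fin m)}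
  {ξ ξ' : EuclideanSpace ℝ (Fin n)} {β : ℝ → ℝ → ℝ} {g : ℝ ≃o ℝ} {a r t v ε τ : ℝ}

/-- The open-loop strategy of applying an input `u` of level `a`, that is with `‖u‖ ≤ g a`, and
stopping at time `t`. -/
structure IsPlan (g : ℝ ≃o ℝ) (a t : ℝ) (u : ℝ → EuclideanSpace ℝ (Fin m)) : Prop where
  level_nonneg : 0 ≤ a
  time_nonneg : 0 ≤ t
  input : IsInputWithin u (g a)

/-- A system satisfying the SIIOS estimate. The gain enters through its inverse `g`, extended to
an increasing bijection of `ℝ`: inputs bounded by `g a` contribute at most `a` to the output. -/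
structure SIIOSEstimate
    (f : EuclideanSpace ℝ (Fin n) → EuclideanSpace ℝ (Fin m) → EuclideanSpace ℝ (Fin n))
    (h : EuclideanSpace ℝ (Fin n) → EuclideanSpace ℝ (Fin p))
    (x : ℝ → EuclideanSpace ℝ (Fin n) → (ℝ → EuclideanSpace ℝ (Fin m)) →
      EuclideanSpace ℝ (Fin n)) (β : ℝ → ℝ → ℝ) (g : ℝ ≃o ℝ) : Prop where
  locallyLipschitz_velocity : LocallyLipschitz (Function.uncurry f)
  locallyLipschitz_output : LocallyLipschitz h
  isBIBS : IsBIBS f x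
  isClassKL : IsClassKL β
  map_zero : g 0 = 0
  norm_output_le_max : ∀ ξ {a t u}, IsPlan g a t u → ‖h (x t ξ u)‖ ≤ max (β ‖h ξ‖ t) a

lemma IsSIIOS.exists_siiosEstimate (hf : LocallyLipschitz (Function.uncurry f))
    (hh : LocallyLipschitz h) (hB : IsBIBS f x) (hS : IsSIIOS h x) :
    ∃ β g, SIIOSEstimate f h x β g := by
  obtain ⟨β, γ, hβ, hγ, hβγ⟩ := hS
  obtain ⟨e, he0, he⟩ := hγ.isClassKInfty_id_add.exists_orderIso
  have hg0 : e.symm 0 = 0 := e.symm_apply_eq.2 he0.symm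
  refine ⟨β, e.symm, hf, hh, hB, hβ, hg0, fun ξ a t u hu => ?_⟩
  have hga : 0 ≤ e.symm a := hg0.ge.trans (e.symm.monotone hu.level_nonneg)
  have hea := he _ hga
  rw [e.apply_symm_apply] at hea
  refine (hβγ ξ u hu.input.isInput hu.input.bddInput t hu.time_nonneg).trans
    (max_le_max le_rfl ?_)
  linarith [hγ.mono uNorm_nonneg (hu.input.uNorm_le hga)]

/-- The weight of the time `t` in the reward, increasing from `1` to `2`: postponing a reward
makes it strictly more valuable. -/
def timeWeight (t : ℝ) : ℝ := 2 - Real.exp (-t)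

lemma one_le_timeWeight (ht : 0 ≤ t) : 1 ≤ timeWeight t := by
  unfold timeWeight
  linarith [Real.exp_le_one_iff.2 (neg_nonpos.2 ht)]

lemma timeWeight_le_two : timeWeight t ≤ 2 := by
  unfold timeWeight
  linarith [Real.exp_pos (-t)]

lemma exp_neg_mul_le_timeWeight_sub {T : ℝ} (hτ : 0 ≤ τ) (ht : t + τ ≤ T) :
    Real.exp (-T) * τ ≤ timeWeight (t + τ) - timeWeight t := by
  have hexp : Real.exp (-t) = Real.exp (-(t + τ)) * Real.exp τ := by
    rw [← Real.exp_add]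
    ring_nf
  calc Real.exp (-T) * τ ≤ Real.exp (-(t + τ)) * (Real.exp τ - 1) := by
        gcongr
        linarith [Real.add_one_le_exp τ]
    _ = timeWeight (t + τ) - timeWeight t := by
        unfold timeWeight
        rw [hexp]
        ring

/-- The reward, from the initial state `ξ`, of a plan of level `a` stopped at time `t`: the
excess of the output over the level, truncated at the level. -/
def reward (h : EuclideanSpace ℝ (Fin n) → EuclideanSpace ℝ (Fin p))
    (x : ℝ → EuclideanSpace ℝ (Fin n) → (ℝ → EuclideanSpace ℝ (Fin m)) →
      EuclideanSpace ℝ (Fin n)) (ξ : EuclideanSpace ℝ (Fin n)) (a t : ℝ)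
    (u : ℝ → EuclideanSpace ℝ (Fin m)) : ℝ :=
  timeWeight t * min a (‖h (x t ξ u)‖ - a)

/-- The supremum of the rewards of all plans. It is a real supremum, which `SIIOSEstimate` makes
meaningful: rewards are then bounded. -/
def openLoopValue (h : EuclideanSpace ℝ (Fin n) → EuclideanSpace ℝ (Fin p))
    (x : ℝ → EuclideanSpace ℝ (Fin n) → (ℝ → EuclideanSpace ℝ (Fin m)) →
      EuclideanSpace ℝ (Fin n)) (g : ℝ ≃o ℝ) (ξ : EuclideanSpace ℝ (Fin n)) : ℝ :=
  sSup {ρ | ∃ a t u, IsPlan g a t u ∧ reward h x ξ a t u = ρ}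

lemma half_lt_min_of_lt_reward (ht : 0 ≤ t) (hv : 0 ≤ v) (hlt : v < reward h x ξ a t u) :
    v / 2 < min a (‖h (x t ξ u)‖ - a) := by
  have hw : 1 ≤ timeWeight t := one_le_timeWeight ht
  have hmin : 0 < min a (‖h (x t ξ u)‖ - a) :=
    pos_of_mul_pos_right (hv.trans_lt hlt) (zero_le_one.trans hw)
  have hle := mul_le_mul_of_nonneg_right (timeWeight_le_two (t := t)) hmin.le
  unfold reward at hlt
  linarith

lemma reward_le_reward_add (ht : 0 ≤ t) :
    reward h x ξ a t u ≤ reward h x ξ' a t u + 2 * ‖h (x t ξ u) - h (x t ξ' u)‖ := by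
  have hmin : min a (‖h (x t ξ u)‖ - a) ≤
      min a (‖h (x t ξ' u)‖ - a) + ‖h (x t ξ u) - h (x t ξ' u)‖ := by
    rw [← min_add_add_right]
    refine min_le_min (le_add_of_nonneg_right (norm_nonneg _)) ?_
    linarith [norm_le_norm_add_norm_sub' (h (x t ξ u)) (h (x t ξ' u))]
  have hw : 0 ≤ timeWeight t := zero_le_one.trans (one_le_timeWeight ht)
  calc reward h x ξ a t u
      ≤ timeWeight t * (min a (‖h (x t ξ' u)‖ - a) + ‖h (x t ξ u) - h (x t ξ' u)‖) :=
        mul_le_mul_of_nonneg_left hmin hw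
    _ ≤ reward h x ξ' a t u + 2 * ‖h (x t ξ u) - h (x t ξ' u)‖ := by
        rw [mul_add, reward]
        gcongr
        exact timeWeight_le_two

namespace SIIOSEstimate

lemma isPlan_zero (H : SIIOSEstimate f h x β g) (ha : 0 ≤ a) :
    IsPlan g a 0 fun _ => (0 : EuclideanSpace ℝ (Fin m)) := by
  refine ⟨ha, le_rfl, isInputWithin_const ?_⟩
  rw [norm_zero, ← H.map_zero]
  exact g.monotone ha

lemma norm_output_le (H : SIIOSEstimate f h x β g) (hu : IsPlan g a t u)
    (hpos : 0 < reward h x ξ a t u) : ‖h (x t ξ u)‖ ≤ β ‖h ξ‖ t := by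
  have hmin := half_lt_min_of_lt_reward hu.time_nonneg le_rfl hpos
  refine (le_max_iff.1 (H.norm_output_le_max ξ hu)).resolve_right ?_
  linarith [min_le_right a (‖h (x t ξ u)‖ - a)]

lemma reward_le (H : SIIOSEstimate f h x β g) (hu : IsPlan g a t u) :
    reward h x ξ a t u ≤ β ‖h ξ‖ 0 := by
  have hβ : 0 ≤ β ‖h ξ‖ 0 := (H.isClassKL.1 0 self_mem_Ici).nonneg (norm_nonneg _)
  by_contra! hlt
  have hmin := half_lt_min_of_lt_reward hu.time_nonneg hβ hlt
  linarith [H.norm_output_le hu (hβ.trans_lt hlt),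
    H.isClassKL.anti_right (norm_nonneg (h ξ)) le_rfl hu.time_nonneg,
    min_le_left a (‖h (x t ξ u)‖ - a), min_le_right a (‖h (x t ξ u)‖ - a)]

lemma reward_le_value (H : SIIOSEstimate f h x β g) (hu : IsPlan g a t u) :
    reward h x ξ a t u ≤ openLoopValue h x g ξ := by
  refine le_csSup ⟨β ‖h ξ‖ 0, ?_⟩ ⟨a, t, u, hu, rfl⟩
  rintro _ ⟨a, t, u, hu, rfl⟩
  exact H.reward_le hu

lemma value_le_of_forall_le (H : SIIOSEstimate f h x β g)
    (hv : ∀ a t u, IsPlan g a t u → reward h x ξ a t u ≤ v) : openLoopValue h x g ξ ≤ v := by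
  refine csSup_le ⟨_, 0, 0, _, H.isPlan_zero le_rfl, rfl⟩ ?_
  rintro _ ⟨a, t, u, hu, rfl⟩
  exact hv a t u hu

lemma value_le (H : SIIOSEstimate f h x β g) (ξ : EuclideanSpace ℝ (Fin n)) :
    openLoopValue h x g ξ ≤ β ‖h ξ‖ 0 :=
  H.value_le_of_forall_le fun _ _ _ hu => H.reward_le hu

lemma half_norm_output_le_value (H : SIIOSEstimate f h x β g) (ξ : EuclideanSpace ℝ (Fin n)) :
    ‖h ξ‖ / 2 ≤ openLoopValue h x g ξ := by
  have hu := H.isPlan_zero (a := ‖h ξ‖ / 2) (by positivity)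
  have hreward : reward h x ξ (‖h ξ‖ / 2) 0 (fun _ => 0) = ‖h ξ‖ / 2 := by
    rw [reward, timeWeight, H.isBIBS.apply_zero hu.input, sub_half, min_self, neg_zero,
      Real.exp_zero]
    ring
  exact hreward.symm.trans_le (H.reward_le_value hu)

lemma value_nonneg (H : SIIOSEstimate f h x β g) (ξ : EuclideanSpace ℝ (Fin n)) :
    0 ≤ openLoopValue h x g ξ :=
  le_trans (by positivity) (H.half_norm_output_le_value ξ)

lemma exists_norm_output_le (H : SIIOSEstimate f h x β g) (R : ℝ) :
    ∃ r, 0 ≤ r ∧ ∀ ξ, ‖ξ‖ ≤ R → ‖h ξ‖ ≤ r := by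
  obtain ⟨r, hr⟩ := (isCompact_closedBall (0 : EuclideanSpace ℝ (Fin n)) R
    ).exists_bound_of_continuousOn H.locallyLipschitz_output.continuous.continuousOn
  exact ⟨max r 0, le_max_right _ _, fun ξ hξ =>
    (hr ξ (mem_closedBall_zero_iff.2 hξ)).trans (le_max_left _ _)⟩

lemma exists_value_le (H : SIIOSEstimate f h x β g) (R : ℝ) :
    ∃ A, ∀ ξ, ‖ξ‖ ≤ R → openLoopValue h x g ξ ≤ A := by
  obtain ⟨r, -, hr⟩ := H.exists_norm_output_le R
  exact ⟨β r 0, fun ξ hξ => (H.value_le ξ).trans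
    (H.isClassKL.mono_left (norm_nonneg _) (hr ξ hξ) le_rfl)⟩

lemma exists_bound_of_lt_reward (H : SIIOSEstimate f h x β g) (hr : 0 ≤ r) (hv : 0 < v) :
    ∃ A T, 0 ≤ A ∧ ∀ ξ a t u, ‖h ξ‖ ≤ r → IsPlan g a t u → v < reward h x ξ a t u →
      a ≤ A ∧ t ≤ T := by
  obtain ⟨T, -, hT⟩ := H.isClassKL.exists_forall_le hr hv
  refine ⟨β r 0, T, (H.isClassKL.1 0 self_mem_Ici).nonneg hr, fun ξ a t u hξ hu hlt => ?_⟩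
  obtain ⟨hva, hvy⟩ := lt_min_iff.1 (half_lt_min_of_lt_reward hu.time_nonneg hv.le hlt)
  have hyβ := H.norm_output_le hu (hv.trans hlt)
  constructor
  · linarith [H.isClassKL.mono_left (norm_nonneg _) hξ hu.time_nonneg,
      H.isClassKL.anti_right hr le_rfl hu.time_nonneg]
  · by_contra! hTt
    linarith [hT _ t (norm_nonneg (h ξ)) hξ hTt.le]

lemma reward_concatInput (H : SIIOSEstimate f h x β g) (hu : IsPlan g a t u) (hμ : ‖μ‖ ≤ g a)
    (hτ : 0 ≤ τ) :
    reward h x ξ a (t + τ) (concatInput τ μ u) = reward h x (x τ ξ fun _ => μ) a t u +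
      (timeWeight (t + τ) - timeWeight t) *
        min a (‖h (x t (x τ ξ fun _ => μ) u)‖ - a) := by
  rw [reward, reward, H.isBIBS.apply_concatInput H.locallyLipschitz_velocity hu.input hμ hτ
    hu.time_nonneg]
  ring

/-- A plan worth more than `v` has level at least `v / 2`, so it may be preceded by the input `μ`
without changing its level; this delays the reward and thereby increases it. -/
lemma exists_value_flow_le (H : SIIOSEstimate f h x β g) (hε : 0 < ε) (hr : 0 ≤ r) :
    ∃ q, 0 < q ∧ ∀ ξ, openLoopValue h x g ξ ≤ r → ∀ v, ε ≤ v → ∀ μ, ‖μ‖ ≤ g (v / 2) →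
      ∀ τ, 0 ≤ τ →
        openLoopValue h x g (x τ ξ fun _ => μ) ≤ max v (openLoopValue h x g ξ - τ * q) := by
  obtain ⟨_, T, -, hT⟩ := H.exists_bound_of_lt_reward (r := 2 * r) (by positivity) hε
  refine ⟨Real.exp (-T) * (ε / 2), by positivity, fun ξ hξ v hv μ hμ τ hτ =>
    H.value_le_of_forall_le fun a t u hu => le_max_iff.2 (or_iff_not_imp_left.2 fun hlt => ?_)⟩
  have hmin := half_lt_min_of_lt_reward hu.time_nonneg (hε.le.trans hv) (not_le.1 hlt)
  have hμa : ‖μ‖ ≤ g a := hμ.trans (g.monotone (hmin.le.trans (min_le_left _ _)))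
  have hconcat : IsPlan g a (t + τ) (concatInput τ μ u) :=
    ⟨hu.level_nonneg, add_nonneg hu.time_nonneg hτ, hu.input.concat hμa⟩
  have hsplit := H.reward_concatInput (ξ := ξ) hu hμa hτ
  have hw : 0 ≤ timeWeight (t + τ) - timeWeight t :=
    le_trans (by positivity) (exp_neg_mul_le_timeWeight_sub hτ le_rfl)
  have hgain_nonneg := mul_nonneg hw ((half_pos (hε.trans_le hv)).trans hmin).le
  have htT : t + τ ≤ T := (hT ξ a _ _ (by linarith [H.half_norm_output_le_value ξ]) hconcat
    (by linarith)).2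
  have hgain : Real.exp (-T) * τ * (ε / 2) ≤ (timeWeight (t + τ) - timeWeight t) *
      min a (‖h (x t (x τ ξ fun _ => μ) u)‖ - a) :=
    mul_le_mul (exp_neg_mul_le_timeWeight_sub hτ htT) (by linarith) (by positivity) hw
  linarith [H.reward_le_value (ξ := ξ) hconcat]

lemma exists_max_value_le_add (H : SIIOSEstimate f h x β g) (hε : 0 < ε) (R : ℝ) :
    ∃ L, 0 ≤ L ∧ ∀ ξ ξ', ‖ξ‖ ≤ R → ‖ξ'‖ ≤ R →
      max (openLoopValue h x g ξ) ε ≤ max (openLoopValue h x g ξ') ε + L * ‖ξ - ξ'‖ := by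
  obtain ⟨r, hr, hhr⟩ := H.exists_norm_output_le R
  obtain ⟨A, T, hA, hAT⟩ := H.exists_bound_of_lt_reward hr hε
  have hgA : 0 ≤ g A := H.map_zero.ge.trans (g.monotone hA)
  obtain ⟨L, hL, hhL⟩ := H.isBIBS.exists_norm_output_sub_le H.locallyLipschitz_velocity
    H.locallyLipschitz_output R T hgA
  refine ⟨2 * L, by positivity, fun ξ ξ' hξ hξ' => max_le (H.value_le_of_forall_le
    fun a t u hu => ?_) (le_add_of_le_of_nonneg (le_max_right _ _) (by positivity))⟩
  rcases le_or_gt (reward h x ξ a t u) ε with hle | hlt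
  · exact le_add_of_le_of_nonneg (hle.trans (le_max_right _ _)) (by positivity)
  · obtain ⟨haA, htT⟩ := hAT ξ a t u (hhr ξ hξ) hu hlt
    linarith [reward_le_reward_add (h := h) (x := x) (a := a) (u := u) (ξ := ξ) (ξ' := ξ')
      hu.time_nonneg, hhL ξ ξ' u t hξ hξ' (hu.input.mono (g.monotone haA)) ⟨hu.time_nonneg, htT⟩,
      H.reward_le_value (ξ := ξ') hu, le_max_left (openLoopValue h x g ξ') ε]

lemma locallyLipschitz_max_value (H : SIIOSEstimate f h x β g) (hε : 0 < ε) :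
    LocallyLipschitz fun ξ => max (openLoopValue h x g ξ) ε := by
  intro ξ
  obtain ⟨L, -, hL⟩ := H.exists_max_value_le_add hε (‖ξ‖ + 1)
  refine ⟨L.toNNReal, Metric.ball 0 (‖ξ‖ + 1),
    Metric.isOpen_ball.mem_nhds (mem_ball_zero_iff.2 (lt_add_one _)),
    LipschitzOnWith.of_le_add_mul' L fun y hy z hz => ?_⟩
  rw [dist_eq_norm]
  exact hL y z (mem_ball_zero_iff.1 hy).le (mem_ball_zero_iff.1 hz).le

lemma exists_max_value_flow_le (H : SIIOSEstimate f h x β g) (hε : 0 < ε) :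
    ∃ q : ℕ → ℝ, Antitone q ∧ (∀ k, 0 < q k) ∧ ∀ R, ∃ r, 0 < r ∧ ∀ a y μ τ, ‖a‖ ≤ R →
      3 * ε ≤ openLoopValue h x g a → ‖μ‖ ≤ g (openLoopValue h x g a / 4) → ‖y - a‖ ≤ r →
      0 ≤ τ → τ * q ⌈openLoopValue h x g a⌉₊ ≤ ε / 2 →
      max (openLoopValue h x g (x τ y fun _ => μ)) ε ≤
        max (openLoopValue h x g y) ε - τ * q ⌈openLoopValue h x g a⌉₊ := by
  choose b hb hflow using fun k : ℕ => H.exists_value_flow_le (r := 2 * k) hε (by positivity)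
  obtain ⟨q, hq_anti, hq, hqb⟩ := exists_antitone_pos_le hb
  refine ⟨q, hq_anti, hq, fun R => ?_⟩
  obtain ⟨L, hL, hVL⟩ := H.exists_max_value_le_add hε (R + 1)
  refine ⟨min 1 (ε / (L + 1)), by positivity, fun a y μ τ ha hεa hμ hy hτ hτq => ?_⟩
  have hLy : L * ‖y - a‖ ≤ ε := by
    have := (le_div_iff₀' (by positivity)).1 (hy.trans (min_le_right _ _))
    linarith [norm_nonneg (y - a)]
  have hyR : ‖y‖ ≤ R + 1 := by
    linarith [norm_le_norm_add_norm_sub' y a, hy.trans (min_le_left _ _)]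
  have hya := hVL y a hyR (by linarith)
  have hay := hVL a y (by linarith) hyR
  rw [norm_sub_rev] at hay
  set v := openLoopValue h x g a
  rw [max_eq_left (by linarith : ε ≤ v)] at hya hay
  have hεy : ε < openLoopValue h x g y :=
    (lt_max_iff.1 (show ε < max (openLoopValue h x g y) ε by linarith)).resolve_right (lt_irrefl ε)
  rw [max_eq_left hεy.le] at hya hay ⊢
  have hdec := hflow ⌈v⌉₊ y (by linarith [Nat.le_ceil v]) (v / 2) (by linarith) μ
    (by rwa [div_div, show (2 : ℝ) * 2 = 4 by norm_num]) τ hτ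
  refine max_le (hdec.trans (max_le (by linarith) ?_)) (by linarith)
  linarith [mul_le_mul_of_nonneg_left (hqb ⌈v⌉₊) hτ]

lemma exists_decreasesNear_max_value (H : SIIOSEstimate f h x β g) (hε : 0 < ε) :
    ∃ q : ℕ → ℝ, Antitone q ∧ (∀ k, 0 < q k) ∧ ∀ R, ∃ r, 0 < r ∧ ∀ a μ, ‖a‖ ≤ R →
      3 * ε ≤ openLoopValue h x g a → ‖μ‖ ≤ g (openLoopValue h x g a / 4) →
      DecreasesNear (fun ξ => max (openLoopValue h x g ξ) ε) a (f a μ) r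
        (q ⌈openLoopValue h x g a⌉₊) := by
  obtain ⟨q, hq_anti, hq, hflow⟩ := H.exists_max_value_flow_le hε
  refine ⟨fun k => q k / 2, fun i j hij => div_le_div_of_nonneg_right (hq_anti hij) zero_le_two,
    fun k => half_pos (hq k), fun R => ?_⟩
  obtain ⟨A, hA⟩ := H.exists_value_le R
  obtain ⟨r₁, hr₁, hflow⟩ := hflow R
  obtain ⟨r₂, hr₂, -, heuler⟩ := H.isBIBS.exists_euler_step_le H.locallyLipschitz_velocity
    (H.locallyLipschitz_max_value hε) R (le_max_right (g (A / 4)) 0) (half_pos (hq ⌈A⌉₊))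
  refine ⟨min r₁ r₂, lt_min hr₁ hr₂, fun a μ ha hεa hμ => ?_⟩
  set k := ⌈openLoopValue h x g a⌉₊
  have hqk : q ⌈A⌉₊ ≤ q k := hq_anti (Nat.ceil_mono (hA a ha))
  have hμA : ‖μ‖ ≤ max (g (A / 4)) 0 :=
    (hμ.trans (g.monotone (by linarith [hA a ha]))).trans (le_max_left _ _)
  have hτ₀ : 0 < ε / 2 / q k := div_pos (half_pos hε) (hq k)
  refine ⟨min r₂ (ε / 2 / q k), lt_min hr₂ hτ₀, fun y hy τ hτ => ?_⟩
  have hτr : τ ≤ r₂ := hτ.2.le.trans (min_le_left _ _)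
  have hτq : τ * q k ≤ ε / 2 := (le_div_iff₀ (hq k)).1 (hτ.2.le.trans (min_le_right _ _))
  have hdec := hflow a y μ τ ha hεa hμ (hy.trans (min_le_left _ _)) hτ.1.le hτq
  have hstep := heuler a y μ τ ha (hy.trans (min_le_right _ _)) hμA hτ.1.le hτr
  linarith [mul_le_mul_of_nonneg_left hqk hτ.1.le]

end SIIOSEstimate

end OpenLoop

/-! ### Lyapunov functions above a level -/

section LyapunovAbove

variable {E : Type*} [NormedAddCommGroup E] [NormedSpace ℝ E] {F : E → Set E} {W U ψ : E → ℝ}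
  {ξ : E} {c c' ε s ℓ : ℝ}

lemma fderiv_comp_apply {ρ : ℝ → ℝ} (hρ : DifferentiableAt ℝ ρ (U ξ))
    (hU : DifferentiableAt ℝ U ξ) (v : E) :
    fderiv ℝ (fun ξ => ρ (U ξ)) ξ v = deriv ρ (U ξ) * fderiv ℝ U ξ v := by
  change fderiv ℝ (ρ ∘ U) ξ v = _
  rw [(hρ.hasDerivAt.comp_hasFDerivAt ξ hU.hasFDerivAt).fderiv, smul_apply, smul_eq_mul]

/-- A smooth function `ψ` which is comparable with `W`, does not increase along the differential
inclusion `ξ' ∈ F ξ`, and strictly decreases along it where `c ≤ W`, locally uniformly in the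
value of `W`. -/
structure IsLyapunovAbove (F : E → Set E) (W : E → ℝ) (c : ℝ) (ψ : E → ℝ) : Prop where
  contDiff : ContDiff ℝ ∞ ψ
  nonneg : ∀ ξ, 0 ≤ ψ ξ
  le_two_mul : ∀ ξ, ψ ξ ≤ 2 * W ξ
  exists_mul_le : ∃ b, 0 < b ∧ ∀ ξ, c ≤ W ξ → b * W ξ ≤ ψ ξ
  fderiv_nonpos : ∀ ξ, ∀ v ∈ F ξ, fderiv ℝ ψ ξ v ≤ 0
  exists_fderiv_le : ∀ C, ∃ q, 0 < q ∧ ∀ ξ, c ≤ W ξ → W ξ ≤ C → ∀ v ∈ F ξ, fderiv ℝ ψ ξ v ≤ -q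

namespace IsLyapunovAbove

lemma mono (hψ : IsLyapunovAbove F W c ψ) (hc : c ≤ c') : IsLyapunovAbove F W c' ψ where
  contDiff := hψ.contDiff
  nonneg := hψ.nonneg
  le_two_mul := hψ.le_two_mul
  exists_mul_le := hψ.exists_mul_le.imp fun _ hb => ⟨hb.1, fun ξ hξ => hb.2 ξ (hc.trans hξ)⟩
  fderiv_nonpos := hψ.fderiv_nonpos
  exists_fderiv_le C := (hψ.exists_fderiv_le C).imp fun _ hq =>
    ⟨hq.1, fun ξ hξ => hq.2 ξ (hc.trans hξ)⟩

lemma tsum_mul {ψ : ℕ → E → ℝ} {a c : ℕ → ℝ} (hψ : ∀ k, IsLyapunovAbove F W (c k) (ψ k))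
    (ha0 : ∀ k, 0 < a k) (ha : ∀ k, a k ≤ 1 / 2 / 2 ^ k)
    (hsum : ∀ ξ, SmoothlySummableAt (fun k ξ => a k * ψ k ξ) ξ) (k : ℕ) :
    IsLyapunovAbove F W (c k) fun ξ => ∑' k, a k * ψ k ξ := by
  have hterm : ∀ ξ k, 0 ≤ a k * ψ k ξ := fun ξ k => mul_nonneg (ha0 k).le ((hψ k).nonneg ξ)
  have hfderiv : ∀ ξ v, HasSum (fun k => a k * fderiv ℝ (ψ k) ξ v)
      (fderiv ℝ (fun ξ => ∑' k, a k * ψ k ξ) ξ v) := fun ξ v =>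
    ((hsum ξ).hasSum_fderiv_apply v).congr_fun fun k => by
      rw [fderiv_const_mul ((hψ k).contDiff.differentiable (by simp) ξ)]
      rfl
  have hfderiv_term : ∀ ξ, ∀ v ∈ F ξ, ∀ k, a k * fderiv ℝ (ψ k) ξ v ≤ 0 := fun ξ v hv k =>
    mul_nonpos_of_nonneg_of_nonpos (ha0 k).le ((hψ k).fderiv_nonpos ξ v hv)
  refine ⟨contDiff_iff_contDiffAt.2 fun ξ => (hsum ξ).contDiffAt_tsum,
    fun ξ => tsum_nonneg (hterm ξ), fun ξ => ?_, ?_,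
    fun ξ v hv => hasSum_le (hfderiv_term ξ v hv) (hfderiv ξ v) hasSum_zero, fun C => ?_⟩
  · have hgeom := (hasSum_geometric_two' 1).mul_right (2 * W ξ)
    rw [one_mul] at hgeom
    exact hasSum_le (fun k => mul_le_mul (ha k) ((hψ k).le_two_mul ξ) ((hψ k).nonneg ξ)
      (by positivity)) (hsum ξ).summable.hasSum hgeom
  · obtain ⟨b, hb0, hb⟩ := (hψ k).exists_mul_le
    refine ⟨a k * b, mul_pos (ha0 k) hb0, fun ξ hξ => ?_⟩
    rw [mul_assoc]
    exact (mul_le_mul_of_nonneg_left (hb ξ hξ) (ha0 k).le).trans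
      ((hsum ξ).summable.le_tsum k fun j _ => hterm ξ j)
  · obtain ⟨q, hq0, hq⟩ := (hψ k).exists_fderiv_le C
    refine ⟨a k * q, mul_pos (ha0 k) hq0, fun ξ hξ hC v hv => ?_⟩
    have hle := le_hasSum (hfderiv ξ v).neg k fun j _ => neg_nonneg.2 (hfderiv_term ξ v hv j)
    linarith [mul_le_mul_of_nonneg_left (hq ξ hξ hC v hv) (ha0 k).le]

end IsLyapunovAbove

lemma exists_forall_isLyapunovAbove [FiniteDimensional ℝ E] [HasContDiffBump E]
    (hψ : ∀ c, 0 < c → ∃ ψ, IsLyapunovAbove F W c ψ) :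
    ∃ V, ∀ c, 0 < c → IsLyapunovAbove F W c V := by
  choose ψ hψ using fun k : ℕ => hψ ((1 / 2 : ℝ) ^ k) (by positivity)
  obtain ⟨a, ha0, ha, hsum⟩ := exists_smoothlySummableAt_mul fun k => (hψ k).contDiff
  refine ⟨fun ξ => ∑' k, a k * ψ k ξ, fun c hc => ?_⟩
  obtain ⟨k, hk⟩ := exists_pow_lt_of_lt_one hc one_half_lt_one
  exact (IsLyapunovAbove.tsum_mul hψ ha0 ha hsum k).mono hk.le

/-- A smooth function of `s` which vanishes for `s ≤ ℓ` and increases beyond, used to erase a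
function below the level `ℓ`. -/
def levelCutoff (ℓ s : ℝ) : ℝ := s * expNegInvGlue (s - ℓ)

lemma contDiff_levelCutoff : ContDiff ℝ ∞ (levelCutoff ℓ) :=
  contDiff_id.mul (expNegInvGlue.contDiff.comp (contDiff_id.sub contDiff_const))

lemma levelCutoff_of_le (hs : s ≤ ℓ) : levelCutoff ℓ s = 0 := by
  rw [levelCutoff, expNegInvGlue.zero_of_nonpos (sub_nonpos.2 hs), mul_zero]

lemma levelCutoff_nonneg (hs : 0 ≤ s) : 0 ≤ levelCutoff ℓ s :=
  mul_nonneg hs (expNegInvGlue.nonneg _)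

lemma levelCutoff_le_self (hs : 0 ≤ s) : levelCutoff ℓ s ≤ s := by
  refine mul_le_of_le_one_right hs ?_
  unfold expNegInvGlue
  split_ifs with hsℓ
  · exact zero_le_one
  · exact Real.exp_le_one_iff.2 (neg_nonpos.2 (inv_nonneg.2 (not_le.1 hsℓ).le))

lemma deriv_levelCutoff :
    deriv (levelCutoff ℓ) s = expNegInvGlue (s - ℓ) + s * deriv expNegInvGlue (s - ℓ) := by
  have hglue : HasDerivAt (fun s => expNegInvGlue (s - ℓ)) (deriv expNegInvGlue (s - ℓ)) s :=
    (expNegInvGlue.contDiff.differentiable one_ne_zero _).hasDerivAt.comp_sub_const s ℓ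
  change deriv (id * fun s => expNegInvGlue (s - ℓ)) s = _
  simpa using ((hasDerivAt_id s).mul hglue).deriv

lemma deriv_levelCutoff_of_le (hs : s ≤ ℓ) : deriv (levelCutoff ℓ) s = 0 := by
  have hglue : expNegInvGlue (s - ℓ) = 0 := expNegInvGlue.zero_of_nonpos (sub_nonpos.2 hs)
  have hmin : IsLocalMin expNegInvGlue (s - ℓ) :=
    Eventually.of_forall fun y => hglue.trans_le (expNegInvGlue.nonneg y)
  rw [deriv_levelCutoff, hglue, hmin.deriv_eq_zero, mul_zero, add_zero]

lemma expNegInvGlue_le_deriv_levelCutoff (hs : 0 ≤ s) :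
    expNegInvGlue (s - ℓ) ≤ deriv (levelCutoff ℓ) s := by
  rw [deriv_levelCutoff]
  exact le_add_of_nonneg_right (mul_nonneg hs expNegInvGlue.monotone.deriv_nonneg)

lemma isLyapunovAbove_levelCutoff_comp {Q : ℕ → ℝ} (hε : 0 < ε) (hW : ∀ ξ, 0 ≤ W ξ)
    (hU : ContDiff ℝ ∞ U) (hU0 : ∀ ξ, 0 ≤ U ξ) (hWU : ∀ ξ, W ξ ≤ U ξ + ε)
    (hUW : ∀ ξ, 4 * ε < U ξ → U ξ ≤ W ξ + ε) (hQ : Antitone Q) (hQ0 : ∀ k, 0 < Q k)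
    (hdec : ∀ ξ, 4 * ε < U ξ → ∀ v ∈ F ξ, fderiv ℝ U ξ v ≤ -Q ⌈W ξ⌉₊) :
    IsLyapunovAbove F W (6 * ε) fun ξ => levelCutoff (4 * ε) (U ξ) := by
  have hfderiv : ∀ ξ v, fderiv ℝ (fun ξ => levelCutoff (4 * ε) (U ξ)) ξ v =
      deriv (levelCutoff (4 * ε)) (U ξ) * fderiv ℝ U ξ v := fun ξ =>
    fderiv_comp_apply (contDiff_levelCutoff.differentiable (by simp) _)
      (hU.differentiable (by simp) ξ)
  have hrate : ∀ ξ, 4 * ε < U ξ → ∀ v ∈ F ξ,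
      fderiv ℝ (fun ξ => levelCutoff (4 * ε) (U ξ)) ξ v ≤
        -(expNegInvGlue (U ξ - 4 * ε) * Q ⌈W ξ⌉₊) := fun ξ hξ v hv => by
    have hderiv := expNegInvGlue_le_deriv_levelCutoff (ℓ := 4 * ε) (hU0 ξ)
    rw [hfderiv, ← mul_neg]
    exact (mul_le_mul_of_nonneg_left (hdec ξ hξ v hv) ((expNegInvGlue.nonneg _).trans hderiv)).trans
      (mul_le_mul_of_nonpos_right hderiv (neg_nonpos.2 (hQ0 _).le))
  have hglue : ∀ ξ, 6 * ε ≤ W ξ → expNegInvGlue ε ≤ expNegInvGlue (U ξ - 4 * ε) := fun ξ hξ =>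
    expNegInvGlue.monotone (by linarith [hWU ξ])
  have hglue0 : 0 < expNegInvGlue ε := expNegInvGlue.pos_of_pos hε
  refine ⟨contDiff_levelCutoff.comp hU, fun ξ => levelCutoff_nonneg (hU0 ξ), fun ξ => ?_,
    ⟨expNegInvGlue ε / 2, half_pos hglue0, fun ξ hξ => ?_⟩, fun ξ v hv => ?_,
    fun C => ⟨expNegInvGlue ε * Q ⌈C⌉₊, mul_pos hglue0 (hQ0 _), fun ξ hξ hC v hv => ?_⟩⟩
  · rcases le_or_gt (U ξ) (4 * ε) with hUε | hUε
    · linarith [levelCutoff_of_le hUε, hW ξ]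
    · linarith [levelCutoff_le_self (ℓ := 4 * ε) (hU0 ξ), hUW ξ hUε]
  · calc expNegInvGlue ε / 2 * W ξ = W ξ / 2 * expNegInvGlue ε := by ring
      _ ≤ levelCutoff (4 * ε) (U ξ) :=
        mul_le_mul (by linarith [hWU ξ]) (hglue ξ hξ) hglue0.le (hU0 ξ)
  · rcases le_or_gt (U ξ) (4 * ε) with hUε | hUε
    · rw [hfderiv, deriv_levelCutoff_of_le hUε, zero_mul]
    · exact (hrate ξ hUε v hv).trans
        (neg_nonpos.2 (mul_nonneg (expNegInvGlue.nonneg _) (hQ0 _).le))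
  · exact (hrate ξ (by linarith [hWU ξ]) v hv).trans (neg_le_neg
      (mul_le_mul (hglue ξ hξ) (hQ (Nat.ceil_mono hC)) (hQ0 _).le (expNegInvGlue.nonneg _)))

end LyapunovAbove

section Approximation

variable {n m p : ℕ}
  {f : EuclideanSpace ℝ (Fin n) → EuclideanSpace ℝ (Fin m) → EuclideanSpace ℝ (Fin n)}
  {h : EuclideanSpace ℝ (Fin n) → EuclideanSpace ℝ (Fin p)}
  {x : ℝ → EuclideanSpace ℝ (Fin n) → (ℝ → EuclideanSpace ℝ (Fin m)) → EuclideanSpace ℝ (Fin n)}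
  {β : ℝ → ℝ → ℝ} {g : ℝ ≃o ℝ} {ε c : ℝ}

/-- The velocities at `ξ` under the inputs that are small compared with the open-loop value. -/
def smallInputVelocities
    (f : EuclideanSpace ℝ (Fin n) → EuclideanSpace ℝ (Fin m) → EuclideanSpace ℝ (Fin n))
    (h : EuclideanSpace ℝ (Fin n) → EuclideanSpace ℝ (Fin p))
    (x : ℝ → EuclideanSpace ℝ (Fin n) → (ℝ → EuclideanSpace ℝ (Fin m)) →
      EuclideanSpace ℝ (Fin n)) (g : ℝ ≃o ℝ) (ξ : EuclideanSpace ℝ (Fin n)) :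
    Set (EuclideanSpace ℝ (Fin n)) :=
  f ξ '' {μ | ‖μ‖ ≤ g (openLoopValue h x g ξ / 4)}

namespace SIIOSEstimate

lemma exists_norm_smallInputVelocities_le (H : SIIOSEstimate f h x β g) (R : ℝ) :
    ∃ B, 0 ≤ B ∧ ∀ ξ, ‖ξ‖ ≤ R → ∀ v ∈ smallInputVelocities f h x g ξ, ‖v‖ ≤ B := by
  obtain ⟨A, hA⟩ := H.exists_value_le R
  obtain ⟨B, hB0, hB⟩ := exists_norm_le_of_norm_le H.locallyLipschitz_velocity.continuous R
    (g (A / 4))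
  refine ⟨B, hB0, fun ξ hξ v hv => ?_⟩
  obtain ⟨μ, hμ, rfl⟩ := hv
  exact hB ξ μ hξ (hμ.trans (g.monotone (by linarith [hA ξ hξ])))

lemma exists_contDiff_approx_value (H : SIIOSEstimate f h x β g) (hε : 0 < ε) :
    ∃ U : EuclideanSpace ℝ (Fin n) → ℝ, ContDiff ℝ ∞ U ∧
      (∀ ξ, |U ξ - max (openLoopValue h x g ξ) ε| ≤ ε) ∧
      ∃ q : ℕ → ℝ, Antitone q ∧ (∀ k, 0 < q k) ∧
        ∀ ξ, 3 * ε ≤ openLoopValue h x g ξ → ∀ v ∈ smallInputVelocities f h x g ξ,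
          fderiv ℝ U ξ v ≤ -q ⌈openLoopValue h x g ξ⌉₊ := by
  obtain ⟨q, hq_anti, hq, hdec⟩ := H.exists_decreasesNear_max_value hε
  choose r hr hdec using hdec
  choose A hA using fun j : ℕ => H.exists_value_le (j + 1)
  choose B hB0 hB using fun j : ℕ => H.exists_norm_smallInputVelocities_le (j + 1)
  have hδ : ∀ j, 0 < min ε (q ⌈A j⌉₊ / 2 / (B j + 1)) := fun j =>
    lt_min hε (div_pos (half_pos (hq _)) (by linarith [hB0 j]))
  obtain ⟨U, hU, hUW, hUd⟩ := exists_contDiff_approx_shell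
    (H.locallyLipschitz_max_value hε).continuous (r := fun j => r (j + 1)) (fun j => hr _) hδ
  refine ⟨U, hU, fun ξ => (hUW ξ).trans (min_le_left _ _), fun k => q k / 2,
    fun i j hij => div_le_div_of_nonneg_right (hq_anti hij) zero_le_two,
    fun k => half_pos (hq k), fun ξ hξ v hv => ?_⟩
  have hshell : ‖ξ‖ ≤ shell ξ + 1 := norm_lt_shell_add_one.le
  have hvB := hB _ ξ hshell v hv
  have hqA : q ⌈A (shell ξ)⌉₊ ≤ q ⌈openLoopValue h x g ξ⌉₊ :=
    hq_anti (Nat.ceil_mono (hA _ ξ hshell))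
  have herror : min ε (q ⌈A (shell ξ)⌉₊ / 2 / (B (shell ξ) + 1)) * ‖v‖ ≤ q ⌈A (shell ξ)⌉₊ / 2 := by
    have hB1 : 0 < B (shell ξ) + 1 := by linarith [hB0 (shell ξ)]
    calc _ ≤ q ⌈A (shell ξ)⌉₊ / 2 / (B (shell ξ) + 1) * (B (shell ξ) + 1) :=
          mul_le_mul (min_le_right _ _) (by linarith) (norm_nonneg _)
            (div_nonneg (half_pos (hq _)).le hB1.le)
      _ = q ⌈A (shell ξ)⌉₊ / 2 := div_mul_cancel₀ _ hB1.ne'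
  obtain ⟨μ, hμ, rfl⟩ := hv
  linarith [hUd ξ _ _ (hdec _ ξ μ hshell hξ hμ)]

lemma exists_isLyapunovAbove (H : SIIOSEstimate f h x β g) (hc : 0 < c) :
    ∃ ψ, IsLyapunovAbove (smallInputVelocities f h x g) (openLoopValue h x g) c ψ := by
  obtain ⟨ε, hε, rfl⟩ : ∃ ε, 0 < ε ∧ 6 * ε = c := ⟨c / 6, by positivity, by ring⟩
  obtain ⟨U, hU, hUV, q, hq_anti, hq, hdec⟩ := H.exists_contDiff_approx_value hε
  have hVU : ∀ ξ, max (openLoopValue h x g ξ) ε ≤ U ξ + ε := fun ξ => by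
    linarith [(abs_le.1 (hUV ξ)).1]
  have hlow : ∀ ξ, 4 * ε < U ξ → U ξ ≤ openLoopValue h x g ξ + ε := fun ξ hξ => by
    have hUε : U ξ ≤ max (openLoopValue h x g ξ) ε + ε := by linarith [(abs_le.1 (hUV ξ)).2]
    rcases le_max_iff.1 (sub_le_iff_le_add.2 hUε) with hle | hle <;> linarith
  exact ⟨_, isLyapunovAbove_levelCutoff_comp hε H.value_nonneg hU
    (fun ξ => by linarith [(le_max_right _ _).trans (hVU ξ)])
    (fun ξ => (le_max_left _ _).trans (hVU ξ)) hlow hq_anti hq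
    fun ξ hξ => hdec ξ (by linarith [hlow ξ hξ])⟩

end SIIOSEstimate

end Approximation

/-! ### Rescaling -/

section Rescaling

variable {E : Type*} [NormedAddCommGroup E] [NormedSpace ℝ E] {F : E → Set E} {W V ψ : E → ℝ}
  {c : ℝ}

lemma IsLyapunovAbove.exists_fderiv_le_of_self_le (hψ : IsLyapunovAbove F W c ψ) (C : ℝ) :
    ∃ q, 0 < q ∧ ∀ ξ, 2 * c ≤ ψ ξ → ψ ξ ≤ C → ∀ v ∈ F ξ, fderiv ℝ ψ ξ v ≤ -q := by
  obtain ⟨b, hb0, hb⟩ := hψ.exists_mul_le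
  obtain ⟨q, hq0, hq⟩ := hψ.exists_fderiv_le (C / b)
  refine ⟨q, hq0, fun ξ hξ hC => ?_⟩
  have hcW : c ≤ W ξ := by linarith [hψ.le_two_mul ξ]
  exact hq ξ hcW ((le_div_iff₀' hb0).2 ((hb ξ hcW).trans hC))

lemma exists_rescaling_fderiv_le_of_le (hV : Differentiable ℝ V)
    (hV_nonpos : ∀ ξ, ∀ v ∈ F ξ, fderiv ℝ V ξ v ≤ 0)
    (hV_lt : ∀ c C, 0 < c → ∃ q, 0 < q ∧ ∀ ξ, c ≤ V ξ → V ξ ≤ C → ∀ v ∈ F ξ,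
      fderiv ℝ V ξ v ≤ -q) :
    ∃ Θ, ContDiff ℝ ∞ Θ ∧ IsClassKInfty Θ ∧
      (∀ ξ, ∀ v ∈ F ξ, fderiv ℝ (fun ξ => Θ (V ξ)) ξ v ≤ 0) ∧
      ∀ c, 0 < c → ∃ q, 0 < q ∧ ∀ ξ, c ≤ V ξ → ∀ v ∈ F ξ,
        fderiv ℝ (fun ξ => Θ (V ξ)) ξ v ≤ -q := by
  obtain ⟨Θ, hΘ, hΘK, hΘd⟩ := exists_contDiff_isClassKInfty
    (D := fun s => {k | ∀ ξ, V ξ = s → 1 ≤ s → ∀ v ∈ F ξ, k * fderiv ℝ V ξ v ≤ -1})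
    (fun s k k' hkk' hk ξ hξ hs v hv =>
      (mul_le_mul_of_nonpos_right hkk' (hV_nonpos ξ v hv)).trans (hk ξ hξ hs v hv))
    (fun s => by
      obtain ⟨q, hq0, hq⟩ := hV_lt 1 (s + 1) one_pos
      refine ⟨q⁻¹, ?_⟩
      filter_upwards [gt_mem_nhds (lt_add_one s)] with y hy ξ hξ h1 v hv
      have hqv := hq ξ (h1.trans_eq hξ.symm) (hξ.trans_le hy.le) v hv
      calc q⁻¹ * fderiv ℝ V ξ v ≤ q⁻¹ * -q := mul_le_mul_of_nonneg_left hqv (inv_pos.2 hq0).le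
        _ = -1 := by rw [mul_neg, inv_mul_cancel₀ hq0.ne'])
  have hfderiv : ∀ ξ v, fderiv ℝ (fun ξ => Θ (V ξ)) ξ v = deriv Θ (V ξ) * fderiv ℝ V ξ v :=
    fun ξ => fderiv_comp_apply (hΘ.differentiable (by simp) _) (hV ξ)
  refine ⟨Θ, hΘ, hΘK, fun ξ v hv => ?_, fun c hc => ?_⟩
  · rw [hfderiv]
    exact mul_nonpos_of_nonneg_of_nonpos (zero_le_one.trans (hΘd _).1) (hV_nonpos ξ v hv)
  · obtain ⟨q, hq0, hq⟩ := hV_lt c 1 hc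
    refine ⟨min q 1, lt_min hq0 one_pos, fun ξ hξ v hv => ?_⟩
    rw [hfderiv]
    rcases le_total (V ξ) 1 with h1 | h1
    · calc deriv Θ (V ξ) * fderiv ℝ V ξ v ≤ 1 * fderiv ℝ V ξ v :=
            mul_le_mul_of_nonpos_right (hΘd _).1 (hV_nonpos ξ v hv)
        _ ≤ -min q 1 := by linarith [hq ξ hξ h1 v hv, min_le_left q 1]
    · linarith [(hΘd (V ξ)).2 ξ rfl h1 v hv, min_le_right q 1]

lemma exists_rescaling_fderiv_le (hV : Differentiable ℝ V) (hV0 : ∀ ξ, 0 ≤ V ξ)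
    (hV_nonpos : ∀ ξ, ∀ v ∈ F ξ, fderiv ℝ V ξ v ≤ 0)
    (hV_lt : ∀ c C, 0 < c → ∃ q, 0 < q ∧ ∀ ξ, c ≤ V ξ → V ξ ≤ C → ∀ v ∈ F ξ,
      fderiv ℝ V ξ v ≤ -q) :
    ∃ Θ α, ContDiff ℝ ∞ Θ ∧ IsClassKInfty Θ ∧ IsClassK α ∧
      ∀ ξ, ∀ v ∈ F ξ, fderiv ℝ (fun ξ => Θ (V ξ)) ξ v ≤ -α (Θ (V ξ)) := by
  obtain ⟨Θ, hΘ, hΘK, hΘ_nonpos, hΘ_lt⟩ := exists_rescaling_fderiv_le_of_le hV hV_nonpos hV_lt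
  obtain ⟨κ, hκ, hκV⟩ := exists_isClassK_comp_le (X := {z : E × E // z.2 ∈ F z.1})
    (S := fun z => V z.1.1) (D := fun z => -fderiv ℝ (fun ξ => Θ (V ξ)) z.1.1 z.1.2)
    (fun z => hV0 _) (fun z => neg_nonneg.2 (hΘ_nonpos _ _ z.2)) fun c hc =>
      (hΘ_lt c hc).imp fun q hq => ⟨hq.1, fun z hz => le_neg_of_le_neg (hq.2 _ hz _ z.2)⟩
  obtain ⟨e, he0, he⟩ := hΘK.exists_orderIso
  refine ⟨Θ, fun s => κ (e.symm s), hΘ, hΘK, hκ.comp (isClassKInfty_orderIso_symm e he0).1,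
    fun ξ v hv => ?_⟩
  have hΘe : e.symm (Θ (V ξ)) = V ξ := e.symm_apply_eq.2 (he _ (hV0 ξ)).symm
  simp only [hΘe]
  exact le_neg_of_le_neg (hκV ⟨(ξ, v), hv⟩)

end Rescaling

section Converse

variable {n m p : ℕ}
  {f : EuclideanSpace ℝ (Fin n) → EuclideanSpace ℝ (Fin m) → EuclideanSpace ℝ (Fin n)}
  {h : EuclideanSpace ℝ (Fin n) → EuclideanSpace ℝ (Fin p)}
  {x : ℝ → EuclideanSpace ℝ (Fin n) → (ℝ → EuclideanSpace ℝ (Fin m)) → EuclideanSpace ℝ (Fin n)}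
  {V : EuclideanSpace ℝ (Fin n) → ℝ} {β : ℝ → ℝ → ℝ} {g : ℝ ≃o ℝ}

namespace SIIOSEstimate

lemma exists_isClassKInfty_norm_output_le (H : SIIOSEstimate f h x β g)
    (hV : ∀ c, 0 < c → IsLyapunovAbove (smallInputVelocities f h x g) (openLoopValue h x g) c V) :
    ∃ α, IsClassKInfty α ∧ ∀ ξ, α ‖h ξ‖ ≤ V ξ := by
  refine exists_isClassKInfty_comp_le (fun ξ => norm_nonneg (h ξ)) (hV 1 one_pos).nonneg
    fun c hc => ?_
  obtain ⟨b, hb0, hb⟩ := (hV (c / 2) (half_pos hc)).exists_mul_le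
  refine ⟨b / 2, half_pos hb0, fun ξ hξ => ?_⟩
  have hhalf := H.half_norm_output_le_value ξ
  calc b / 2 * ‖h ξ‖ = b * (‖h ξ‖ / 2) := by ring
    _ ≤ b * openLoopValue h x g ξ := mul_le_mul_of_nonneg_left hhalf hb0.le
    _ ≤ V ξ := hb ξ (by linarith)

lemma exists_isSIIOSLyapunov (H : SIIOSEstimate f h x β g) :
    ∃ V : EuclideanSpace ℝ (Fin n) → ℝ, IsSIIOSLyapunov f h V := by
  obtain ⟨V, hV⟩ := exists_forall_isLyapunovAbove fun _ => H.exists_isLyapunovAbove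
  have hV1 := hV 1 one_pos
  obtain ⟨Θ, α₃, hΘ, hΘK, hα₃, hdec⟩ := exists_rescaling_fderiv_le
    (hV1.contDiff.differentiable (by simp)) hV1.nonneg hV1.fderiv_nonpos fun c C hc => by
      simpa only [mul_div_cancel₀ c (two_ne_zero' ℝ)] using
        (hV (c / 2) (half_pos hc)).exists_fderiv_le_of_self_le C
  obtain ⟨α, hα, hαV⟩ := H.exists_isClassKInfty_norm_output_le hV
  have hβ : IsClassKInfty fun s => 2 * (s + β s 0) :=
    (H.isClassKL.1 0 self_mem_Ici).isClassKInfty_id_add.const_mul two_pos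
  have hχ : IsClassKInfty fun s => 8 * g.symm s :=
    (isClassKInfty_orderIso_symm g H.map_zero).const_mul (by norm_num)
  refine ⟨fun ξ => Θ (V ξ), hΘ.comp hV1.contDiff, fun ξ => hΘK.1.nonneg (hV1.nonneg ξ),
    ⟨_, _, hΘK.comp hα, hΘK.comp hβ, fun ξ => ⟨?_, ?_⟩⟩,
    fun s => Θ (8 * g.symm s), α₃, (hΘK.comp hχ).1, hα₃, fun ξ μ hμ => hdec ξ _ ⟨μ, ?_, rfl⟩⟩
  · exact hΘK.1.mono (hα.1.nonneg (norm_nonneg _)) (hαV ξ)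
  · exact hΘK.1.mono (hV1.nonneg ξ)
      (by linarith [hV1.le_two_mul ξ, H.value_le ξ, norm_nonneg (h ξ)])
  · have hμV : 8 * g.symm ‖μ‖ ≤ V ξ :=
      (hΘK.1.2.1.le_iff_le (hχ.1.nonneg (norm_nonneg μ)) (hV1.nonneg ξ)).1 hμ
    exact (g.symm_apply_le).1 (by linarith [hV1.le_two_mul ξ])

end SIIOSEstimate

end Converse

/-- A BIBS system is SIIOS if and only if it admits an SIIOS-Lyapunov function. -/
theorem siios_iff_exists_siiosLyapunov {n m p : ℕ}
    (f : EuclideanSpace ℝ (Fin n) → EuclideanSpace ℝ (Fin m) → EuclideanSpace ℝ (Fin n))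
    (h : EuclideanSpace ℝ (Fin n) → EuclideanSpace ℝ (Fin p))
    (x : ℝ → EuclideanSpace ℝ (Fin n) → (ℝ → EuclideanSpace ℝ (Fin m)) →
      EuclideanSpace ℝ (Fin n))
    (hf : LocallyLipschitz fun q : EuclideanSpace ℝ (Fin n) × EuclideanSpace ℝ (Fin m) =>
      f q.1 q.2)
    (hf0 : f 0 0 = 0)
    (hh : LocallyLipschitz h) (hh0 : h 0 = 0)
    (hBIBS : IsBIBS f x) :
    IsSIIOS h x ↔ ∃ V : EuclideanSpace ℝ (Fin n) → ℝ, IsSIIOSLyapunov f h V := by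
  refine ⟨fun hS => ?_, fun ⟨V, hV⟩ => hV.isSIIOS hf hBIBS⟩
  obtain ⟨β, g, H⟩ := hS.exists_siiosEstimate hf hh hBIBS
  exact H.exists_isSIIOSLyapunov
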